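/- arXiv:1510.08740 — 5 statements merged into one kernel-verified Lean document; each statement's English description precedes it below -/
import Mathlib

section
/- Let H be a real Hilbert space, Ψ : H → ℝ ∪ {+∞} proper, lower-semicontinuous and convex, and Φ : H → ℝ convex and continuously differentiable with L-Lipschitz continuous gradient. Suppose S = argmin(Ψ + Φ) is nonempty, and let (x_k) be generated by the accelerated forward-backward algorithm with parameter α > 3 and step size 0 < s < 1/L. Then the function values satisfy lim_{k→∞} k² ((Ψ + Φ)(x_k) − min(Ψ + Φ)) = 0; i.e. (Ψ + Φ)(x_k) − min(Ψ + Φ) = o(k^{-2}). -/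
open Filter RealInnerProductSpace

/-- A nonnegative quasi-nonincreasing sequence with `∑ W n / (n+1)` finite tends to zero. -/
lemma ff_tendsto_zero (W e : ℕ → ℝ) (hW : ∀ n, 0 ≤ W n) (he : ∀ n, 0 ≤ e n)
    (hes : Summable e) (hstep : ∀ n, W (n + 1) ≤ W n + e n)
    (hsum : Summable (fun n : ℕ => W n / ((n : ℝ) + 1))) :
    Tendsto W atTop (nhds 0) := by
  have hanti : Antitone (fun n => W n - ∑ i ∈ Finset.range n, e i) := by
    apply antitone_nat_of_succ_le
    intro n
    rw [Finset.sum_range_succ]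
    linarith [hstep n]
  have hbdd : BddBelow (Set.range (fun n => W n - ∑ i ∈ Finset.range n, e i)) := by
    refine ⟨-∑' i, e i, ?_⟩
    rintro _ ⟨n, rfl⟩
    have := hes.sum_le_tsum (Finset.range n) (fun i _ => he i)
    simp only
    linarith [hW n]
  have hlim := (tendsto_atTop_ciInf hanti hbdd).add hes.hasSum.tendsto_sum_nat
  simp only [sub_add_cancel] at hlim
  set w := (⨅ n, (W n - ∑ i ∈ Finset.range n, e i)) + ∑' i, e i with hw
  have hw0 : 0 ≤ w := ge_of_tendsto' hlim hW
  rcases hw0.eq_or_lt with h | h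
  · rw [← h] at hlim
    exact hlim
  · exfalso
    have hev : ∀ᶠ n in atTop, w / 2 < W n := hlim.eventually (lt_mem_nhds (by linarith))
    have h1 : Summable (fun n : ℕ => (w / 2) / ((n : ℝ) + 1)) := by
      apply Summable.of_norm_bounded_eventually_nat hsum
      filter_upwards [hev] with n hn
      rw [Real.norm_of_nonneg (by positivity)]
      gcongr
    have h2 : Summable (fun n : ℕ => 1 / ((n : ℝ) + 1)) := by
      have := h1.mul_left (2 / w)
      refine this.congr fun n => ?_
      field_simp
    have h3 := (summable_nat_add_iff (f := fun n : ℕ => 1 / (n : ℝ)) 1).1 (by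
      refine h2.congr fun n => ?_
      push_cast; rfl)
    exact Real.not_summable_one_div_natCast h3

/-- The purely real-analytic part of the argument. -/
lemma ff_real (a s : ℝ) (θ d E : ℕ → ℝ) (ha : 2 < a) (hs : 0 < s)
    (hθ : ∀ n, 0 ≤ θ n) (hd : ∀ n, 0 ≤ d n) (hE : ∀ n, 0 ≤ E n)
    (c : ℝ) (hc : 0 < c)
    (h1 : ∀ n : ℕ, E (n + 1) + c * ((n : ℝ) + 1) * θ n ≤ E n)
    (h2 : ∀ n : ℕ, 2 * s * ((n : ℝ) + 2 + a) ^ 2 * (θ (n + 1) - θ n)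
      + ((n : ℝ) + 2 + a) ^ 2 * d (n + 1) ≤ ((n : ℝ) + 1) ^ 2 * d n) :
    Tendsto (fun n : ℕ => ((n : ℝ) + 2) ^ 2 * θ n) atTop (nhds 0) := by
  have S1 : Summable (fun n : ℕ => ((n : ℝ) + 1) * θ n) := by
    apply summable_of_sum_range_le (c := E 0 / c) (fun n => by have := hθ n; positivity)
    intro n
    have : c * ∑ i ∈ Finset.range n, ((i : ℝ) + 1) * θ i + E n ≤ E 0 := by
      induction n with
      | zero => simp
      | succ n ih => rw [Finset.sum_range_succ]; nlinarith [h1 n]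
    rw [le_div_iff₀ hc]
    nlinarith [hE n]
  set W : ℕ → ℝ := fun n => 2 * s * ((n : ℝ) + 1 + a) ^ 2 * θ n + ((n : ℝ) + 1) ^ 2 * d n with hWdef
  set e : ℕ → ℝ := fun n => 2 * s * (2 * ((n : ℝ) + 2) + 2 * a - 1) * θ n with hedef
  have hW : ∀ n, 0 ≤ W n := fun n => by
    have := hθ n; have := hd n; simp only [hWdef]; positivity
  have he : ∀ n, 0 ≤ e n := fun n => by
    have h : 0 ≤ 2 * ((n : ℝ) + 2) + 2 * a - 1 := by
      have : (0 : ℝ) ≤ n := n.cast_nonneg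
      linarith
    have := hθ n; simp only [hedef]; positivity
  have hes : Summable e := by
    apply Summable.of_nonneg_of_le he (fun n => ?_) (S1.mul_left (2 * s * (2 * a + 3)))
    have hn : (0 : ℝ) ≤ n := n.cast_nonneg
    have : (2 * ((n : ℝ) + 2) + 2 * a - 1) ≤ (2 * a + 3) * ((n : ℝ) + 1) := by nlinarith
    have h3 := mul_le_mul_of_nonneg_left this (mul_nonneg (by positivity : 0 ≤ 2 * s) (hθ n))
    simp only [hedef]
    linarith
  have hstep' : ∀ n, W (n + 1) + 2 * a * ((n : ℝ) + 2) * d (n + 1) ≤ W n + e n := by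
    intro n
    simp only [hWdef, hedef]
    push_cast
    have := h2 n
    have := mul_nonneg (sq_nonneg a) (hd (n + 1))
    linarith
  have hstep : ∀ n, W (n + 1) ≤ W n + e n := by
    intro n
    have : 0 ≤ 2 * a * ((n : ℝ) + 2) * d (n + 1) := by have := hd (n + 1); positivity
    linarith [hstep' n]
  have S2 : Summable (fun n : ℕ => ((n : ℝ) + 2) * d (n + 1)) := by
    apply summable_of_sum_range_le (c := (W 0 + ∑' i, e i) / (2 * a))
      (fun n => by have := hd (n + 1); positivity)
    intro n
    have h : 2 * a * ∑ i ∈ Finset.range n, ((i : ℝ) + 2) * d (i + 1) + W n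
        ≤ W 0 + ∑ i ∈ Finset.range n, e i := by
      induction n with
      | zero => simp
      | succ n ih => rw [Finset.sum_range_succ, Finset.sum_range_succ]; nlinarith [hstep' n]
    rw [le_div_iff₀ (by positivity)]
    have := hes.sum_le_tsum (Finset.range n) (fun i _ => he i)
    nlinarith [hW n]
  have S3 : Summable (fun n : ℕ => ((n : ℝ) + 1) * d n) := by
    apply (summable_nat_add_iff (f := fun n : ℕ => ((n : ℝ) + 1) * d n) 1).1
    refine S2.congr fun n => ?_
    push_cast; ring
  have S4 : Summable (fun n : ℕ => W n / ((n : ℝ) + 1)) := by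
    apply Summable.of_nonneg_of_le (fun n => div_nonneg (hW n) (by positivity)) (fun n => ?_)
      ((S1.mul_left (2 * s * (1 + a) ^ 2)).add S3)
    have hn : (0 : ℝ) ≤ n := n.cast_nonneg
    rw [div_le_iff₀ (by positivity)]
    simp only [hWdef]
    have : ((n : ℝ) + 1 + a) ^ 2 ≤ ((1 + a) * ((n : ℝ) + 1)) ^ 2 := by
      apply pow_le_pow_left₀ (by positivity)
      nlinarith
    have h3 := mul_le_mul_of_nonneg_left this (mul_nonneg (by positivity : 0 ≤ 2 * s) (hθ n))
    nlinarith
  have hT := (ff_tendsto_zero W e hW he hes hstep S4).mul_const (1 / (2 * s))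
  rw [zero_mul] at hT
  refine squeeze_zero (fun n => by have := hθ n; positivity) (fun n => ?_) hT
  have hn : (0 : ℝ) ≤ n := n.cast_nonneg
  rw [mul_one_div, le_div_iff₀ (by positivity)]
  simp only [hWdef]
  have : ((n : ℝ) + 2) ^ 2 ≤ ((n : ℝ) + 1 + a) ^ 2 := by
    apply pow_le_pow_left₀ (by positivity)
    linarith
  have h3 := mul_le_mul_of_nonneg_left this (mul_nonneg (by positivity : 0 ≤ 2 * s) (hθ n))
  have := mul_nonneg (sq_nonneg ((n : ℝ) + 1)) (hd n)
  linarith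

section
variable {H : Type*} [NormedAddCommGroup H] [InnerProductSpace ℝ H] [CompleteSpace H]

lemma ff_line (Φ : H → ℝ) (Φ' : H → H) (hΦ_diff : ∀ u, HasGradientAt Φ (Φ' u) u) (p v : H) (t : ℝ) :
    HasDerivAt (fun t : ℝ => Φ (p + t • v)) ⟪Φ' (p + t • v), v⟫ t := by
  have h1 : HasDerivAt (fun t : ℝ => p + t • v) v t := by
    simpa using ((hasDerivAt_id t).smul_const v).const_add p
  have h2 := (hΦ_diff (p + t • v)).hasFDerivAt.comp_hasDerivAt t h1
  simpa [Function.comp_def] using h2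

lemma ff_descent (Φ : H → ℝ) (Φ' : H → H) (L : ℝ) (hL : 0 < L)
    (hΦ_diff : ∀ u, HasGradientAt Φ (Φ' u) u)
    (hΦ_lip : LipschitzWith (Real.toNNReal L) Φ') (p q : H) :
    Φ q ≤ Φ p + ⟪Φ' p, q - p⟫ + L / 2 * ‖q - p‖ ^ 2 := by
  set v := q - p with hv
  have hder : ∀ t : ℝ, HasDerivAt
      (fun t : ℝ => Φ (p + t • v) - t * ⟪Φ' p, v⟫ - L / 2 * ‖v‖ ^ 2 * t ^ 2)
      (⟪Φ' (p + t • v), v⟫ - ⟪Φ' p, v⟫ - L * ‖v‖ ^ 2 * t) t := by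
    intro t
    have h := ((ff_line Φ Φ' hΦ_diff p v t).sub ((hasDerivAt_id t).mul_const ⟪Φ' p, v⟫)).sub
      ((hasDerivAt_pow 2 t).const_mul (L / 2 * ‖v‖ ^ 2))
    refine HasDerivAt.congr_deriv h ?_
    norm_num
    ring
  have hanti : AntitoneOn
      (fun t : ℝ => Φ (p + t • v) - t * ⟪Φ' p, v⟫ - L / 2 * ‖v‖ ^ 2 * t ^ 2) (Set.Icc 0 1) := by
    apply antitoneOn_of_deriv_nonpos (convex_Icc 0 1)
    · exact fun t _ => (hder t).continuousAt.continuousWithinAt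
    · exact fun t _ => (hder t).differentiableAt.differentiableWithinAt
    · intro t ht
      rw [interior_Icc] at ht
      rw [(hder t).deriv, ← inner_sub_left]
      have h1 := real_inner_le_norm (Φ' (p + t • v) - Φ' p) v
      have h2 := hΦ_lip.norm_sub_le (p + t • v) p
      rw [Real.coe_toNNReal _ hL.le, add_sub_cancel_left, norm_smul, Real.norm_of_nonneg ht.1.le] at h2
      have h3 := mul_le_mul_of_nonneg_right h2 (norm_nonneg v)
      nlinarith
  have := hanti (Set.left_mem_Icc.2 zero_le_one) (Set.right_mem_Icc.2 zero_le_one) zero_le_one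
  simp [hv] at this
  simp only [hv]
  linarith

lemma ff_convex (Φ : H → ℝ) (Φ' : H → H) (hΦ_convex : ConvexOn ℝ Set.univ Φ)
    (hΦ_diff : ∀ u, HasGradientAt Φ (Φ' u) u) (p q : H) :
    Φ p + ⟪Φ' p, q - p⟫ ≤ Φ q := by
  have hd := ff_line Φ Φ' hΦ_diff p (q - p) 0
  have hc : ConvexOn ℝ Set.univ (fun t : ℝ => Φ (p + t • (q - p))) := by
    refine ⟨convex_univ, fun a _ b _ u v hu hv huv => ?_⟩
    have := hΦ_convex.2 (Set.mem_univ (p + a • (q - p))) (Set.mem_univ (p + b • (q - p))) hu hv huv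
    convert this using 2
    have : p = (u + v) • p := by rw [huv, one_smul]
    nth_rw 1 [this]
    simp only [smul_eq_mul]
    module
  have := hc.le_slope_of_hasDerivAt (Set.mem_univ 0) (Set.mem_univ 1) zero_lt_one hd
  simp [slope_def_field] at this
  linarith

lemma ff_prox (Ψ : H → EReal) (s : ℝ) (hs : 0 < s) 
    (hΨ_convex : ∀ u v : H, ∀ a b : ℝ, 0 ≤ a → 0 ≤ b → a + b = 1 →
      Ψ (a • u + b • v) ≤ (a : EReal) * Ψ u + (b : EReal) * Ψ v)
    (z v : H) (P : ℝ) (hP : Ψ z = P)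
    (hz : ∀ u : H, Ψ z + ((1 / (2 * s) * ‖z - v‖ ^ 2 : ℝ) : EReal)
        ≤ Ψ u + ((1 / (2 * s) * ‖u - v‖ ^ 2 : ℝ) : EReal))
    (u : H) (Q : ℝ) (hQ : Ψ u = Q) :
    2 * s * P + ‖z - v‖ ^ 2 + ‖u - z‖ ^ 2 ≤ 2 * s * Q + ‖u - v‖ ^ 2 := by
  have key : ∀ t : ℝ, 0 < t → t < 1 →
      2 * s * P + ‖z - v‖ ^ 2 + (1 - t) * ‖u - z‖ ^ 2 ≤ 2 * s * Q + ‖u - v‖ ^ 2 := by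
    intro t ht ht1
    have h1 := (hz ((1 - t) • z + t • u)).trans
      (add_le_add_left (hΨ_convex z u (1 - t) t (by linarith) ht.le (by ring)) _)
    rw [hP, hQ] at h1
    norm_cast at h1
    have h2 : ‖(1 - t) • z + t • u - v‖ ^ 2
        = (1 - t) * ‖z - v‖ ^ 2 + t * ‖u - v‖ ^ 2 - t * (1 - t) * ‖u - z‖ ^ 2 := by
      have e1 : (1 - t) • z + t • u - v = (1 - t) • (z - v) + t • (u - v) := by module
      have e2 : u - z = (u - v) - (z - v) := by abel
      rw [e1, e2, norm_add_sq_real, norm_sub_sq_real (u - v) (z - v), norm_smul, norm_smul, inner_smul_left,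
        inner_smul_right, mul_pow, mul_pow, real_inner_comm]
      simp only [Real.norm_eq_abs, sq_abs, conj_trivial]
      ring
    rw [h2] at h1
    have h3 := mul_le_mul_of_nonneg_left h1 (by positivity : 0 ≤ 2 * s)
    field_simp at h3
    have h4 : 0 ≤ t * ((2 * s * Q + ‖u - v‖ ^ 2) -
      (2 * s * P + ‖z - v‖ ^ 2 + (1 - t) * ‖u - z‖ ^ 2)) := by linarith
    have := nonneg_of_mul_nonneg_right h4 ht
    linarith
  have hlim : Tendsto (fun t : ℝ => 2 * s * P + ‖z - v‖ ^ 2 + (1 - t) * ‖u - z‖ ^ 2)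
      (nhdsWithin 0 (Set.Ioi 0)) (nhds (2 * s * P + ‖z - v‖ ^ 2 + (1 - 0) * ‖u - z‖ ^ 2)) := by
    apply tendsto_nhdsWithin_of_tendsto_nhds
    apply Continuous.tendsto
    fun_prop
  rw [sub_zero, one_mul] at hlim
  refine le_of_tendsto hlim ?_
  filter_upwards [Ioo_mem_nhdsGT (zero_lt_one (α := ℝ))] with t ht
  exact key t ht.1 ht.2

lemma ff_step (Ψ : H → EReal) (Φ : H → ℝ) (Φ' : H → H) (L s : ℝ)
    (hΨ_convex : ∀ u v : H, ∀ a b : ℝ, 0 ≤ a → 0 ≤ b → a + b = 1 →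
      Ψ (a • u + b • v) ≤ (a : EReal) * Ψ u + (b : EReal) * Ψ v)
    (hΦ_convex : ConvexOn ℝ Set.univ Φ)
    (hΦ_diff : ∀ u, HasGradientAt Φ (Φ' u) u)
    (hΦ_lip : LipschitzWith (Real.toNNReal L) Φ') (hL : 0 < L) (hs : 0 < s) (hsL : s * L ≤ 1)
    (z y : H) (P : ℝ) (hP : Ψ z = P)
    (hz : ∀ u : H, Ψ z + ((1 / (2 * s) * ‖z - (y - s • Φ' y)‖ ^ 2 : ℝ) : EReal)
        ≤ Ψ u + ((1 / (2 * s) * ‖u - (y - s • Φ' y)‖ ^ 2 : ℝ) : EReal))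
    (u : H) (Q : ℝ) (hQ : Ψ u = Q) :
    2 * s * (P + Φ z) + ‖z - u‖ ^ 2 ≤ 2 * s * (Q + Φ u) + ‖y - u‖ ^ 2 := by
  have h1 := ff_prox Ψ s hs hΨ_convex z _ P hP hz u Q hQ
  have h2 := ff_descent Φ Φ' L hL hΦ_diff hΦ_lip y z
  have h3 := ff_convex Φ Φ' hΦ_convex hΦ_diff y u
  have e : ∀ w : H, ‖w - (y - s • Φ' y)‖ ^ 2
      = ‖w - y‖ ^ 2 + 2 * s * ⟪Φ' y, w - y⟫ + ‖s • Φ' y‖ ^ 2 := by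
    intro w
    have : w - (y - s • Φ' y) = (w - y) + s • Φ' y := by abel
    rw [this, norm_add_sq_real, inner_smul_right, real_inner_comm]
    ring
  rw [e, e] at h1
  rw [norm_sub_rev z u, norm_sub_rev y u]
  have h4 := mul_le_mul_of_nonneg_left h2 (by positivity : 0 ≤ 2 * s)
  have h5 := mul_le_mul_of_nonneg_left h3 (by positivity : 0 ≤ 2 * s)
  have h6 := mul_le_mul_of_nonneg_right hsL (sq_nonneg ‖z - y‖)
  nlinarith

/-- Convex-combination identity used in the Lyapunov estimate. -/
lemma ff_comb (p x w : H) (t : ℝ) :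
    ‖t • p - (t - 1) • x - w‖ ^ 2
      = t * ((t - 1) * ‖p - x‖ ^ 2 + ‖p - w‖ ^ 2) - (t - 1) * ‖x - w‖ ^ 2 := by
  have e1 : t • p - (t - 1) • x - w = t • (p - w) - (t - 1) • (x - w) := by module
  have e2 : p - x = (p - w) - (x - w) := by abel
  rw [e1, e2, norm_sub_sq_real, norm_sub_sq_real (p - w), norm_smul, norm_smul, inner_smul_left,
        inner_smul_right, mul_pow, mul_pow]
  simp only [Real.norm_eq_abs, sq_abs, conj_trivial]
  ring

end

/-- Theorem 1 (function values): `(Ψ+Φ)(x_k) - min(Ψ+Φ) = o(k⁻²)`. -/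
theorem fast_fista_values_little_o
    {H : Type*} [NormedAddCommGroup H] [InnerProductSpace ℝ H] [CompleteSpace H]
    (Ψ : H → EReal) (Φ : H → ℝ) (Φ' : H → H) (L s α : ℝ)
    (hΨ_ne_bot : ∀ u, Ψ u ≠ ⊥) (hΨ_proper : ∃ u, Ψ u ≠ ⊤)
    (hΨ_lsc : LowerSemicontinuous Ψ)
    (hΨ_convex : ∀ u v : H, ∀ a b : ℝ, 0 ≤ a → 0 ≤ b → a + b = 1 →
      Ψ (a • u + b • v) ≤ (a : EReal) * Ψ u + (b : EReal) * Ψ v)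
    (hΦ_convex : ConvexOn ℝ Set.univ Φ)
    (hΦ_diff : ∀ u, HasGradientAt Φ (Φ' u) u)
    (hΦ_lip : LipschitzWith (Real.toNNReal L) Φ')
    (hα : 3 < α) (hs : 0 < s) (hsL : s < 1 / L)
    (x y : ℕ → H)
    (hy : ∀ k : ℕ, 1 ≤ k →
      y k = x k + (((k : ℝ) - 1) / ((k : ℝ) + α - 1)) • (x k - x (k - 1)))
    (hx : ∀ k : ℕ, 1 ≤ k → ∀ u : H,
      Ψ (x (k + 1)) + ((1 / (2 * s) * ‖x (k + 1) - (y k - s • Φ' (y k))‖ ^ 2 : ℝ) : EReal)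
        ≤ Ψ u + ((1 / (2 * s) * ‖u - (y k - s • Φ' (y k))‖ ^ 2 : ℝ) : EReal))
    (xstar : H)
    (hxstar : ∀ u, Ψ xstar + (Φ xstar : EReal) ≤ Ψ u + (Φ u : EReal)) :
    Tendsto
      (fun k : ℕ => (((k : ℝ) ^ 2 : ℝ) : EReal) * ((Ψ (x k) + (Φ (x k) : EReal)) - (Ψ xstar + (Φ xstar : EReal))))
      atTop (nhds 0) := by
  have hL : 0 < L := by
    have : 0 < 1 / L := hs.trans hsL
    simpa using this
  have hsL' : s * L ≤ 1 := by
    rw [lt_div_iff₀ hL] at hsL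
    exact hsL.le
  -- finiteness
  obtain ⟨u0, hu0⟩ := hΨ_proper
  have fin_of : ∀ (v w : H) (a b : ℝ), Ψ w ≠ ⊤ → Ψ v + (a : EReal) ≤ Ψ w + (b : EReal) →
      Ψ v = ((Ψ v).toReal : EReal) := by
    intro v w a b hw h
    refine (EReal.coe_toReal ?_ (hΨ_ne_bot v)).symm
    intro htop
    rw [htop, EReal.top_add_coe, top_le_iff] at h
    exact EReal.add_ne_top hw (EReal.coe_ne_top b) h
  have hfs : Ψ xstar = ((Ψ xstar).toReal : EReal) := fin_of _ _ _ _ hu0 (hxstar u0)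
  have hf : ∀ n : ℕ, Ψ (x (n + 2)) = ((Ψ (x (n + 2))).toReal : EReal) :=
    fun n => fin_of _ _ _ _ hu0 (hx (n + 1) (by omega) u0)
  set m : ℝ := (Ψ xstar).toReal + Φ xstar with hm
  set θ : ℕ → ℝ := fun n => (Ψ (x (n + 2))).toReal + Φ (x (n + 2)) - m with hθdef
  have hθ : ∀ n, 0 ≤ θ n := by
    intro n
    have := hxstar (x (n + 2))
    rw [hfs, hf n] at this
    norm_cast at this
    simp only [hθdef, hm]
    linarith
  set a := α - 1 with ha
  have ha2 : 2 < a := by simp only [ha]; linarith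
  have ha0 : 0 < a := by linarith
  have hy' : ∀ n : ℕ, y (n + 2) = x (n + 2) + (((n : ℝ) + 1) / ((n : ℝ) + 2 + a)) •
      (x (n + 2) - x (n + 1)) := by
    intro n
    rw [hy (n + 2) (by omega), show n + 2 - 1 = n + 1 by omega]
    congr 2
    push_cast
    simp only [ha]
    congr 1 <;> ring
  have hA : ∀ n : ℕ, 2 * s * θ (n + 1) + ‖x (n + 3) - x (n + 2)‖ ^ 2
      ≤ 2 * s * θ n + ‖y (n + 2) - x (n + 2)‖ ^ 2 := by
    intro n
    have := ff_step Ψ Φ Φ' L s hΨ_convex hΦ_convex hΦ_diff hΦ_lip hL hs hsL' (x (n + 3))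
      (y (n + 2)) _ (hf (n + 1)) (hx (n + 2) (by omega)) (x (n + 2)) _ (hf n)
    simp only [hθdef]
    linarith
  have hB : ∀ n : ℕ, 2 * s * θ (n + 1) + ‖x (n + 3) - xstar‖ ^ 2
      ≤ ‖y (n + 2) - xstar‖ ^ 2 := by
    intro n
    have := ff_step Ψ Φ Φ' L s hΨ_convex hΦ_convex hΦ_diff hΦ_lip hL hs hsL' (x (n + 3))
      (y (n + 2)) _ (hf (n + 1)) (hx (n + 2) (by omega)) xstar _ hfs
    simp only [hθdef, hm]
    linarith
  set T : ℕ → ℝ := fun n => ((n : ℝ) + 1 + a) / a with hT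
  set E : ℕ → ℝ := fun n => 2 * s * (T n) ^ 2 * θ n +
    ‖T n • x (n + 2) - (T n - 1) • x (n + 1) - xstar‖ ^ 2 with hE
  set c : ℝ := 2 * s * ((a - 2) / a ^ 2) with hc
  have hc0 : 0 < c := by
    have : 0 < a - 2 := by linarith
    positivity
  have hlim := ff_real a s θ (fun n => ‖x (n + 2) - x (n + 1)‖ ^ 2) E ha2 hs hθ
    (fun n => by positivity) (fun n => by have := hθ n; simp only [hE]; positivity) c hc0 ?_ ?_
  · have hlim2 : Tendsto (fun n : ℕ => (((((n : ℝ) + 2) ^ 2 * θ n : ℝ)) : EReal)) atTop (nhds 0) :=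
      (continuous_coe_real_ereal.tendsto 0).comp hlim
    rw [← tendsto_add_atTop_iff_nat 2]
    refine hlim2.congr fun n => ?_
    rw [hfs, hf n]
    simp only [hθdef, hm]
    push_cast
    rfl
  · intro n
    have hn : (0 : ℝ) ≤ n := n.cast_nonneg
    have hT1 : T (n + 1) = T n + 1 / a := by
      simp only [hT]; push_cast; field_simp; ring
    have hTp : 1 ≤ T (n + 1) := by
      simp only [hT]; push_cast; rw [le_div_iff₀ ha0]; linarith
    have hz : T (n + 1) • y (n + 2) - (T (n + 1) - 1) • x (n + 2) - xstar
        = T n • x (n + 2) - (T n - 1) • x (n + 1) - xstar := by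
      have hb : T (n + 1) * (((n : ℝ) + 1) / ((n : ℝ) + 2 + a)) = T n - 1 := by
        simp only [hT]; push_cast
        have : (n : ℝ) + 2 + a ≠ 0 := by positivity
        field_simp
        ring
      rw [hy', smul_add, smul_smul, hb]
      module
    have i1 := ff_comb (x (n + 3)) (x (n + 2)) xstar (T (n + 1))
    have i2 := ff_comb (y (n + 2)) (x (n + 2)) xstar (T (n + 1))
    rw [hz] at i2
    have hA' := mul_le_mul_of_nonneg_left (hA n)
      (mul_nonneg (by linarith : 0 ≤ T (n + 1)) (by linarith : 0 ≤ T (n + 1) - 1))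
    have hB' := mul_le_mul_of_nonneg_left (hB n) (by linarith : 0 ≤ T (n + 1))
    have hrho : c * ((n : ℝ) + 1) ≤ 2 * s * (T n ^ 2 - T (n + 1) * (T (n + 1) - 1)) := by
      have : (a - 2) / a ^ 2 * ((n : ℝ) + 1) ≤ T n ^ 2 - T (n + 1) * (T (n + 1) - 1) := by
        have e : T n ^ 2 - T (n + 1) * (T (n + 1) - 1)
            = (a - 2) / a ^ 2 * ((n : ℝ) + 1) + (a - 1 + a * (a - 2)) / a ^ 2 := by
          simp only [hT]; push_cast
          field_simp
          ring
        rw [e]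
        have : 0 ≤ (a - 1 + a * (a - 2)) / a ^ 2 := by
          apply div_nonneg _ (by positivity)
          nlinarith
        linarith
      have := mul_le_mul_of_nonneg_left this (by positivity : 0 ≤ 2 * s)
      simp only [hc]
      linarith
    have hR := mul_le_mul_of_nonneg_right hrho (hθ n)
    simp only [hE]
    rw [show n + 1 + 2 = n + 3 from rfl, show n + 1 + 1 = n + 2 from rfl, i1, i2]
    linarith
  · intro n
    have hn : (0 : ℝ) ≤ n := n.cast_nonneg
    have hpos : 0 < (n : ℝ) + 2 + a := by positivity
    have h := mul_le_mul_of_nonneg_left (hA n) (sq_nonneg ((n : ℝ) + 2 + a))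
    have e : ((n : ℝ) + 2 + a) ^ 2 * ‖y (n + 2) - x (n + 2)‖ ^ 2
        = ((n : ℝ) + 1) ^ 2 * ‖x (n + 2) - x (n + 1)‖ ^ 2 := by
      rw [hy', add_sub_cancel_left, norm_smul, mul_pow, Real.norm_eq_abs, sq_abs, div_pow]
      field_simp
    rw [mul_add, mul_add, e] at h
    simp only [show n + 1 + 2 = n + 3 from rfl, show n + 1 + 1 = n + 2 from rfl]
    linarith
end

section
/- Let H be a real Hilbert space, Ψ : H → ℝ ∪ {+∞} proper, lower-semicontinuous and convex, and Φ : H → ℝ convex and continuously differentiable with L-Lipschitz continuous gradient. Suppose S = argmin(Ψ + Φ) is nonempty, and let (x_k) be generated by the accelerated forward-backward algorithm with parameter α > 3 and step size 0 < s < 1/L. Then the velocities satisfy lim_{k→∞} k ‖x_{k+1} − x_k‖ = 0; i.e. ‖x_{k+1} − x_k‖ = o(k^{-1}). -/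
open Filter RealInnerProductSpace

section Aux

variable {H : Type*} [NormedAddCommGroup H] [InnerProductSpace ℝ H]

lemma aux_line [CompleteSpace H] (Φ : H → ℝ) (Φ' : H → H)
    (hΦ_diff : ∀ u, HasGradientAt Φ (Φ' u) u) (y h : H) (t : ℝ) :
    HasDerivAt (fun t : ℝ => Φ (y + t • h)) ⟪Φ' (y + t • h), h⟫ t := by
  have h1 : HasDerivAt (fun t : ℝ => y + t • h) h t := by
    simpa using ((hasDerivAt_id t).smul_const h).const_add y
  have h2 := (hΦ_diff (y + t • h)).hasFDerivAt.comp_hasDerivAt t h1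
  have e : HasDerivAt (fun t : ℝ => Φ (y + t • h))
      ((InnerProductSpace.toDual ℝ H (Φ' (y + t • h))) h) t := h2
  rwa [InnerProductSpace.toDual_apply_apply] at e

lemma aux_descent [CompleteSpace H] (Φ : H → ℝ) (Φ' : H → H) (L : ℝ) (hL : 0 ≤ L)
    (hΦ_diff : ∀ u, HasGradientAt Φ (Φ' u) u)
    (hΦ_lip : LipschitzWith (Real.toNNReal L) Φ') (y h : H) :
    Φ (y + h) ≤ Φ y + ⟪Φ' y, h⟫ + L / 2 * ‖h‖ ^ 2 := by
  have hd : ∀ t : ℝ, HasDerivAt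
      (fun t : ℝ => Φ (y + t • h) - t * ⟪Φ' y, h⟫ - L / 2 * ‖h‖ ^ 2 * t ^ 2)
      (⟪Φ' (y + t • h), h⟫ - ⟪Φ' y, h⟫ - L / 2 * ‖h‖ ^ 2 * (2 * t)) t := by
    intro t
    have h1 := ((aux_line Φ Φ' hΦ_diff y h t).sub ((hasDerivAt_id t).mul_const ⟪Φ' y, h⟫)).sub
      ((hasDerivAt_pow 2 t).const_mul (L / 2 * ‖h‖ ^ 2))
    refine h1.congr_deriv ?_
    simp
  have hanti := antitoneOn_of_deriv_nonpos (convex_Icc (0 : ℝ) 1)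
    (fun t _ => (hd t).continuousAt.continuousWithinAt)
    (fun t _ => (hd t).differentiableAt.differentiableWithinAt) (by
      intro t ht
      rw [interior_Icc] at ht
      rw [(hd t).deriv, ← inner_sub_left]
      have h1 := real_inner_le_norm (Φ' (y + t • h) - Φ' y) h
      have h2 := hΦ_lip.norm_sub_le (y + t • h) y
      rw [Real.coe_toNNReal _ hL, add_sub_cancel_left, norm_smul, Real.norm_of_nonneg ht.1.le] at h2
      have h3 := mul_le_mul_of_nonneg_right h2 (norm_nonneg h)
      nlinarith)
  have := hanti (Set.left_mem_Icc.2 zero_le_one) (Set.right_mem_Icc.2 zero_le_one) zero_le_one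
  simp at this
  linarith

lemma aux_grad [CompleteSpace H] (Φ : H → ℝ) (Φ' : H → H)
    (hΦ_convex : ConvexOn ℝ Set.univ Φ)
    (hΦ_diff : ∀ u, HasGradientAt Φ (Φ' u) u) (y u : H) :
    Φ y + ⟪Φ' y, u - y⟫ ≤ Φ u := by
  have hc : ConvexOn ℝ Set.univ (fun t : ℝ => Φ (y + t • (u - y))) := by
    refine ⟨convex_univ, fun p _ q _ a b ha hb hab => ?_⟩
    have := hΦ_convex.2 (Set.mem_univ (y + p • (u - y))) (Set.mem_univ (y + q • (u - y))) ha hb hab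
    convert this using 2
    obtain rfl : b = 1 - a := by linarith
    simp only [smul_eq_mul]
    module
  have h := aux_line Φ Φ' hΦ_diff y (u - y) 0
  have := hc.le_slope_of_hasDerivAt (Set.mem_univ 0) (Set.mem_univ 1) zero_lt_one h
  simp [slope_def_field] at this
  linarith

lemma aux_small (A B : ℝ) (h : ∀ t : ℝ, 0 < t → t ≤ 1 → A ≤ t * B) : A ≤ 0 := by
  by_contra! hA
  have h1 := h 1 one_pos le_rfl
  have hB : 0 < B := by linarith
  have h2 := h (A / (2 * B)) (by positivity) (by rw [div_le_one (by positivity)]; linarith)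
  have : A / (2 * B) * B = A / 2 := by field_simp
  linarith

lemma aux_prox (Ψ : H → EReal)
    (hΨ_convex : ∀ u v : H, ∀ a b : ℝ, 0 ≤ a → 0 ≤ b → a + b = 1 →
      Ψ (a • u + b • v) ≤ (a : EReal) * Ψ u + (b : EReal) * Ψ v)
    (s : ℝ) (hs : 0 < s) (p v : H)
    (hp : ∀ u : H, Ψ p + ((1 / (2 * s) * ‖p - v‖ ^ 2 : ℝ) : EReal)
        ≤ Ψ u + ((1 / (2 * s) * ‖u - v‖ ^ 2 : ℝ) : EReal))
    (u : H) (a b : ℝ) (ha : Ψ p = a) (hb : Ψ u = b) :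
    s * (a - b) ≤ ⟪p - v, u - p⟫ := by
  have key : ∀ t : ℝ, 0 < t → t ≤ 1 →
      s * (a - b) - ⟪p - v, u - p⟫ ≤ t * (‖u - p‖ ^ 2 / 2) := by
    intro t ht ht1
    have h1 := hΨ_convex p u (1 - t) t (by linarith) ht.le (by ring)
    have h2 := (hp ((1 - t) • p + t • u)).trans (add_le_add_left h1 _)
    rw [ha, hb] at h2
    have h3 : a + (1 / (2 * s) * ‖p - v‖ ^ 2) ≤ ((1 - t) * a + t * b) +
        (1 / (2 * s) * ‖(1 - t) • p + t • u - v‖ ^ 2) := by exact_mod_cast h2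
    have h4 : (1 - t) • p + t • u - v = (p - v) + t • (u - p) := by module
    rw [h4, norm_add_sq_real, norm_smul, inner_smul_right, Real.norm_of_nonneg ht.le] at h3
    have h5 : t * (a - b) ≤ 1 / (2 * s) * (2 * (t * ⟪p - v, u - p⟫) + (t * ‖u - p‖) ^ 2) := by
      linarith
    rw [one_div, inv_mul_eq_div, le_div_iff₀ (by positivity)] at h5
    have h6 : t * (s * (a - b) - ⟪p - v, u - p⟫) ≤ t * (t * (‖u - p‖ ^ 2 / 2)) := by
      linarith
    exact le_of_mul_le_mul_left h6 ht
  linarith [aux_small _ _ key]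

/-- one step inequality -/
lemma aux_step [CompleteSpace H] (Ψ : H → EReal) (Φ : H → ℝ) (Φ' : H → H) (L s : ℝ)
    (hΨ_convex : ∀ u v : H, ∀ a b : ℝ, 0 ≤ a → 0 ≤ b → a + b = 1 →
      Ψ (a • u + b • v) ≤ (a : EReal) * Ψ u + (b : EReal) * Ψ v)
    (hΦ_convex : ConvexOn ℝ Set.univ Φ)
    (hΦ_diff : ∀ u, HasGradientAt Φ (Φ' u) u)
    (hΦ_lip : LipschitzWith (Real.toNNReal L) Φ')
    (hs : 0 < s) (hL : 0 < L) (hsL : s * L < 1) (p y : H)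
    (hp : ∀ u : H, Ψ p + ((1 / (2 * s) * ‖p - (y - s • Φ' y)‖ ^ 2 : ℝ) : EReal)
        ≤ Ψ u + ((1 / (2 * s) * ‖u - (y - s • Φ' y)‖ ^ 2 : ℝ) : EReal))
    (u : H) (a b : ℝ) (ha : Ψ p = a) (hb : Ψ u = b) :
    2 * s * (a + Φ p) ≤ 2 * s * (b + Φ u) + ‖y - u‖ ^ 2 - ‖p - u‖ ^ 2 := by
  have h1 := aux_prox Ψ hΨ_convex s hs p _ hp u a b ha hb
  have h2 := aux_descent Φ Φ' L hL.le hΦ_diff hΦ_lip y (p - y)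
  rw [add_sub_cancel] at h2
  have h3 := aux_grad Φ Φ' hΦ_convex hΦ_diff y u
  have e1 : p - (y - s • Φ' y) = (p - y) + s • Φ' y := by abel
  have e2 : u - p = (u - y) - (p - y) := by abel
  rw [e1, inner_add_left, inner_smul_left, e2] at h1
  simp only [inner_sub_right (𝕜 := ℝ) _ (u - y) (p - y), real_inner_self_eq_norm_sq, conj_trivial] at h1
  have e3 : ‖p - u‖ ^ 2 = ‖p - y‖ ^ 2 - 2 * ⟪p - y, u - y⟫ + ‖y - u‖ ^ 2 := by
    rw [← norm_sub_rev u y, ← norm_sub_sq_real]; congr 2; abel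
  have h4 := mul_le_mul_of_nonneg_left h2 hs.le
  have h5 := mul_le_mul_of_nonneg_left h3 hs.le
  have h6 : s * L * ‖p - y‖ ^ 2 ≤ 1 * ‖p - y‖ ^ 2 := by gcongr
  nlinarith

lemma aux_real (w D E : ℕ → ℝ) (s α : ℝ) (hs : 0 < s) (hα : 3 < α)
    (hw : ∀ k, 2 ≤ k → 0 ≤ w k) (hD : ∀ k, 0 ≤ D k) (hE0 : ∀ k, 2 ≤ k → 0 ≤ E k)
    (hE : ∀ k : ℕ, 2 ≤ k → E (k + 1) + 2 * s * (α - 3) * k * w k ≤ E k)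
    (hF : ∀ k : ℕ, 2 ≤ k → (k : ℝ) ^ 2 * D (k + 1) + 2 * s * (k + α - 1) ^ 2 * w (k + 1)
      + 2 * (α - 1) * k * D (k + 1)
      ≤ ((k : ℝ) - 1) ^ 2 * D k + 2 * s * (k + α - 2) ^ 2 * w k + 2 * s * (2 * k + 2 * α - 3) * w k) :
    Tendsto (fun k : ℕ => (k : ℝ) ^ 2 * D (k + 1)) atTop (nhds 0) := by
  set c : ℝ := (3 + 2 * α) / (α - 3) with hc
  have hα3 : 0 < α - 3 := by linarith
  have hc0 : 0 < c := by positivity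
  have hcα : c * (α - 3) = 3 + 2 * α := by rw [hc]; field_simp
  set F : ℕ → ℝ := fun n => ((n : ℝ) + 1) ^ 2 * D (n + 2) + 2 * s * (n + α) ^ 2 * w (n + 2) with hFdef
  set e : ℕ → ℝ := fun n => E (n + 2) with he
  have hF0 : ∀ n, 0 ≤ F n := fun n => by
    have := hw (n + 2) (by omega)
    have := hD (n + 2)
    simp only [hFdef]; positivity
  have heanti : Antitone e := antitone_nat_of_succ_le fun n => by
    have h1 := hE (n + 2) (by omega)
    have h2 := hw (n + 2) (by omega)
    have : 0 ≤ 2 * s * (α - 3) * ((n + 2 : ℕ) : ℝ) * w (n + 2) := by positivity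
    simp only [he]; linarith
  -- the decrement
  have hG : ∀ n : ℕ, F (n + 1) + c * e (n + 1) + 2 * (α - 1) * (n + 2) * D (n + 3)
      + 2 * s * (n + 2) * w (n + 2) ≤ F n + c * e n := by
    intro n
    have h1 := mul_le_mul_of_nonneg_left (hE (n + 2) (by omega)) hc0.le
    have h2 := hF (n + 2) (by omega)
    have h3 := hw (n + 2) (by omega)
    have h4 : c * (2 * s * (α - 3) * ((n + 2 : ℕ) : ℝ) * w (n + 2))
        = 2 * s * (3 + 2 * α) * (n + 2) * w (n + 2) := by
      rw [← hcα]; push_cast; ring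
    have h5 : 0 ≤ s * w (n + 2) := by positivity
    have h6 : 0 ≤ s * w (n + 2) * n := by positivity
    have h7 : 0 ≤ s * w (n + 2) * α := mul_nonneg h5 (by linarith)
    have h8 : 0 ≤ s * w (n + 2) * α * n := by positivity
    simp only [hFdef, he]
    rw [mul_add, h4] at h1
    push_cast at h1 h2 ⊢
    rw [show n + 2 + 1 = n + 3 from rfl] at h1 h2
    rw [show n + 1 + 2 = n + 3 from rfl]
    have E1 : ((n : ℝ) + 1 + 1) = n + 2 := by ring
    have E2 : ((n : ℝ) + 1 + α) = n + 2 + α - 1 := by ring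
    have E3 : ((n : ℝ) + 2 - 1) = n + 1 := by ring
    have E4 : ((n : ℝ) + 2 + α - 2) = n + α := by ring
    rw [E3, E4] at h2
    rw [E1, E2]
    nlinarith
  set G : ℕ → ℝ := fun n => F n + c * e n with hGdef
  have hG0 : ∀ n, 0 ≤ G n := fun n => by
    have := hF0 n
    have := hE0 (n + 2) (by omega)
    simp only [hGdef, he]; positivity
  have hGanti : Antitone G := antitone_nat_of_succ_le fun n => by
    have h1 := hG n
    have h2 := hw (n + 2) (by omega)
    have h3 := hD (n + 3)
    have : 0 ≤ 2 * (α - 1) * (n + 2) * D (n + 3) := by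
      have : 0 ≤ α - 1 := by linarith
      positivity
    have : 0 ≤ 2 * s * (n + 2) * w (n + 2) := by positivity
    simp only [hGdef]; linarith
  have hGl := tendsto_atTop_ciInf hGanti ⟨0, by rintro _ ⟨n, rfl⟩; exact hG0 n⟩
  have hel := tendsto_atTop_ciInf heanti ⟨0, by rintro _ ⟨n, rfl⟩; exact hE0 _ (by omega)⟩
  obtain ⟨l, hl⟩ : ∃ l, Tendsto F atTop (nhds l) := by
    refine ⟨_, (hGl.sub (hel.const_mul c)).congr fun n => ?_⟩
    simp [hGdef]
  have hl0 : 0 ≤ l := ge_of_tendsto' hl hF0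
  -- summability
  have hdec : ∀ n : ℕ, F (n + 1) * (1 / ((n + 1 : ℕ) : ℝ)) ≤ (1 + 4 * α ^ 2) * (G n - G (n + 2)) := by
    intro n
    have h1 := hG n
    have h2 := hG (n + 1)
    have h3 := hw (n + 2) (by omega)
    have h4 := hD (n + 3)
    have h5 := hw (n + 3) (by omega)
    have h6 := hD (n + 4)
    have h7 : (0:ℝ) ≤ 2 * (α - 1) * (n + 1 + 2) * D (n + 4) := by
      have : 0 ≤ α - 1 := by linarith
      positivity
    have h8 : 0 ≤ 2 * s * (n + 2) * w (n + 2) := by positivity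
    push_cast at h2
    have h9 : 2 * (α - 1) * (n + 2) * D (n + 3) + 2 * s * (n + 1 + 2) * w (n + 3) ≤ G n - G (n + 2) := by
      simp only [hGdef]; linarith
    have hn : (0 : ℝ) ≤ n := Nat.cast_nonneg n
    refine le_trans ?_ (mul_le_mul_of_nonneg_left h9 (by positivity))
    rw [mul_one_div, div_le_iff₀ (by positivity)]
    simp only [hFdef]
    push_cast
    rw [show n + 1 + 2 = n + 3 from rfl]
    have A1 : ((n : ℝ) + 1 + 1) ^ 2 ≤ (1 + 4 * α ^ 2) * (2 * (α - 1) * (n + 2)) * (n + 1) := by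
      have : ((n : ℝ) + 1 + 1) ^ 2 ≤ (n + 2) * (2 * (n + 1)) := by nlinarith
      refine this.trans ?_
      have h10 : 1 ≤ (1 + 4 * α ^ 2) * (α - 1) := by nlinarith
      have h11 : 0 ≤ ((n : ℝ) + 2) * (2 * (n + 1)) := by positivity
      nlinarith
    have A2 : ((n : ℝ) + 1 + α) ^ 2 ≤ (1 + 4 * α ^ 2) * (n + 1 + 2) * (n + 1) := by
      have : (n : ℝ) + 1 + α ≤ 2 * α * (n + 1) := by nlinarith
      calc ((n : ℝ) + 1 + α) ^ 2 ≤ (2 * α * (n + 1)) ^ 2 := by gcongr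
        _ = 4 * α ^ 2 * (n + 1) * (n + 1) := by ring
        _ ≤ _ := by gcongr <;> linarith
    have B1 := mul_le_mul_of_nonneg_right A1 h4
    have B2 := mul_le_mul_of_nonneg_left A2 (show 0 ≤ 2 * s * w (n + 3) by positivity)
    linarith
  have hsum : Summable (fun n : ℕ => F (n + 1) * (1 / ((n + 1 : ℕ) : ℝ))) := by
    refine summable_of_sum_range_le (c := (1 + 4 * α ^ 2) * (G 0 + G 1))
      (fun n => mul_nonneg (hF0 _) (by positivity)) fun N => ?_
    have : ∑ i ∈ Finset.range N, (G i - G (i + 2)) = G 0 + G 1 - G N - G (N + 1) := by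
      induction N with
      | zero => simp
      | succ N ih => rw [Finset.sum_range_succ, ih]; ring
    calc _ ≤ ∑ i ∈ Finset.range N, (1 + 4 * α ^ 2) * (G i - G (i + 2)) :=
          Finset.sum_le_sum fun i _ => hdec i
      _ = (1 + 4 * α ^ 2) * (G 0 + G 1 - G N - G (N + 1)) := by rw [← Finset.mul_sum, this]
      _ ≤ _ := by
        have := hG0 N
        have := hG0 (N + 1)
        gcongr; linarith
  have hlz : l = 0 := by
    by_contra hne
    have hlpos : 0 < l := lt_of_le_of_ne hl0 (Ne.symm hne)
    have hev := ((tendsto_add_atTop_iff_nat 1).2 hl).eventually (lt_mem_nhds (half_lt_self hlpos))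
    obtain ⟨N, hN⟩ := eventually_atTop.1 hev
    have h1 := (summable_nat_add_iff N).2 hsum
    have h2 : Summable (fun n : ℕ => l / 2 * (1 / ((n + (N + 1) : ℕ) : ℝ))) := by
      refine Summable.of_nonneg_of_le (fun n => by positivity) (fun n => ?_) h1
      exact mul_le_mul_of_nonneg_right (hN (n + N) (by omega)).le (by positivity)
    rw [summable_mul_left_iff (by positivity)] at h2
    exact Real.not_summable_one_div_natCast ((summable_nat_add_iff (N + 1)).1 h2)
  rw [hlz] at hl
  rw [← tendsto_add_atTop_iff_nat 1]
  refine squeeze_zero (fun n => mul_nonneg (sq_nonneg _) (hD _)) (fun n => ?_) hl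
  have := hw (n + 2) (by omega)
  have h0 : 0 ≤ 2 * s * (n + α) ^ 2 * w (n + 2) := by positivity
  simp only [hFdef]; push_cast; linarith

end Aux

/-- Theorem 1 (velocities): `‖x_{k+1} - x_k‖ = o(k⁻¹)`. -/
theorem fast_fista_velocities_little_o
    {H : Type*} [NormedAddCommGroup H] [InnerProductSpace ℝ H] [CompleteSpace H]
    (Ψ : H → EReal) (Φ : H → ℝ) (Φ' : H → H) (L s α : ℝ)
    (hΨ_ne_bot : ∀ u, Ψ u ≠ ⊥) (hΨ_proper : ∃ u, Ψ u ≠ ⊤)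
    (hΨ_lsc : LowerSemicontinuous Ψ)
    (hΨ_convex : ∀ u v : H, ∀ a b : ℝ, 0 ≤ a → 0 ≤ b → a + b = 1 →
      Ψ (a • u + b • v) ≤ (a : EReal) * Ψ u + (b : EReal) * Ψ v)
    (hΦ_convex : ConvexOn ℝ Set.univ Φ)
    (hΦ_diff : ∀ u, HasGradientAt Φ (Φ' u) u)
    (hΦ_lip : LipschitzWith (Real.toNNReal L) Φ')
    (hα : 3 < α) (hs : 0 < s) (hsL : s < 1 / L)
    (x y : ℕ → H)
    (hy : ∀ k : ℕ, 1 ≤ k →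
      y k = x k + (((k : ℝ) - 1) / ((k : ℝ) + α - 1)) • (x k - x (k - 1)))
    (hx : ∀ k : ℕ, 1 ≤ k → ∀ u : H,
      Ψ (x (k + 1)) + ((1 / (2 * s) * ‖x (k + 1) - (y k - s • Φ' (y k))‖ ^ 2 : ℝ) : EReal)
        ≤ Ψ u + ((1 / (2 * s) * ‖u - (y k - s • Φ' (y k))‖ ^ 2 : ℝ) : EReal))
    (xstar : H)
    (hxstar : ∀ u, Ψ xstar + (Φ xstar : EReal) ≤ Ψ u + (Φ u : EReal)) :
    Tendsto (fun k : ℕ => (k : ℝ) * ‖x (k + 1) - x k‖) atTop (nhds 0) := by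
  have hL : 0 < L := one_div_pos.1 (hs.trans hsL)
  have hsL' : s * L < 1 := (lt_div_iff₀ hL).1 hsL
  obtain ⟨u0, hu0⟩ := hΨ_proper
  have hfin : ∀ (p : H) (c d : ℝ), Ψ p + (c : EReal) ≤ Ψ u0 + (d : EReal) → Ψ p ≠ ⊤ := by
    intro p c d h hp
    lift Ψ u0 to ℝ using ⟨hu0, hΨ_ne_bot u0⟩ with z
    rw [hp, EReal.top_add_coe, ← EReal.coe_add] at h
    exact EReal.coe_ne_top _ (top_le_iff.1 h)
  have hstar : Ψ xstar = ((Ψ xstar).toReal : EReal) :=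
    (EReal.coe_toReal (hfin _ _ _ (hxstar u0)) (hΨ_ne_bot _)).symm
  have hxk : ∀ k, 2 ≤ k → Ψ (x k) = ((Ψ (x k)).toReal : EReal) := by
    intro k hk
    obtain ⟨j, rfl⟩ : ∃ j, k = j + 1 := ⟨k - 1, by omega⟩
    exact (EReal.coe_toReal (hfin _ _ _ (hx j (by omega) u0)) (hΨ_ne_bot _)).symm
  set w : ℕ → ℝ := fun k => (Ψ (x k)).toReal + Φ (x k) - ((Ψ xstar).toReal + Φ xstar) with hwdef
  have hw : ∀ k, 2 ≤ k → 0 ≤ w k := by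
    intro k hk
    have h := hxstar (x k)
    rw [hstar, hxk k hk] at h
    have h' : (Ψ xstar).toReal + Φ xstar ≤ (Ψ (x k)).toReal + Φ (x k) := by exact_mod_cast h
    simp only [hwdef]; linarith
  set D : ℕ → ℝ := fun k => ‖x k - x (k - 1)‖ ^ 2 with hDdef
  set z : ℕ → H := fun k => (α - 1) • (x k - xstar) + ((k : ℝ) - 1) • (x k - x (k - 1)) with hzdef
  have hI1 : ∀ k, 2 ≤ k → 2 * s * w (k + 1) ≤ 2 * s * w k + ‖y k - x k‖ ^ 2 - ‖x (k + 1) - x k‖ ^ 2 := by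
    intro k hk
    have := aux_step Ψ Φ Φ' L s hΨ_convex hΦ_convex hΦ_diff hΦ_lip hs hL hsL' (x (k + 1)) (y k)
      (hx k (by omega)) (x k) _ _ (hxk (k + 1) (by omega)) (hxk k hk)
    simp only [hwdef]; linarith
  have hI2 : ∀ k, 2 ≤ k → 2 * s * w (k + 1) ≤ ‖y k - xstar‖ ^ 2 - ‖x (k + 1) - xstar‖ ^ 2 := by
    intro k hk
    have := aux_step Ψ Φ Φ' L s hΨ_convex hΦ_convex hΦ_diff hΦ_lip hs hL hsL' (x (k + 1)) (y k)
      (hx k (by omega)) xstar _ _ (hxk (k + 1) (by omega)) hstar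
    simp only [hwdef]; linarith
  have hym : ∀ k : ℕ, 2 ≤ k → ((k : ℝ) + α - 1) • (y k - x k) = ((k : ℝ) - 1) • (x k - x (k - 1)) := by
    intro k hk
    have : (k : ℝ) + α - 1 ≠ 0 := by
      have : (0 : ℝ) ≤ k := Nat.cast_nonneg k
      linarith
    rw [hy k (by omega), add_sub_cancel_left, smul_smul, mul_div_cancel₀ _ this]
  have hmain := aux_real w D (fun k => 2 * s * (k + α - 2) ^ 2 * w k + ‖z k‖ ^ 2) s α hs hα hw
    (fun k => sq_nonneg _) (fun k hk => by have := hw k hk; positivity) ?_ ?_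
  · have h1 := hmain.sqrt
    rw [Real.sqrt_zero] at h1
    refine h1.congr fun k => ?_
    simp only [hDdef, Nat.add_sub_cancel]
    rw [← mul_pow, Real.sqrt_sq (by positivity)]
  · intro k hk
    have hk0 : (0 : ℝ) ≤ k := Nat.cast_nonneg k
    have hm : 0 < (k : ℝ) + α - 1 := by linarith
    have h1 := mul_le_mul_of_nonneg_left (hI1 k hk) (mul_nonneg hk0 hm.le)
    have h2 := mul_le_mul_of_nonneg_left (hI2 k hk) (mul_nonneg (show 0 ≤ α - 1 by linarith) hm.le)
    -- z in terms of y and x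
    have hz1 : z k = (k : ℝ) • (y k - x k) + (α - 1) • (y k - xstar) := by
      simp only [hzdef]
      rw [← hym k hk]; module
    have hz2 : z (k + 1) = (k : ℝ) • (x (k + 1) - x k) + (α - 1) • (x (k + 1) - xstar) := by
      simp only [hzdef, Nat.add_sub_cancel]
      push_cast; module
    have hid : ∀ p : H, ‖(k : ℝ) • (p - x k) + (α - 1) • (p - xstar)‖ ^ 2
        = ((k : ℝ) + α - 1) * (k * ‖p - x k‖ ^ 2 + (α - 1) * ‖p - xstar‖ ^ 2)
          - k * (α - 1) * ‖xstar - x k‖ ^ 2 := by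
      intro p
      have e : xstar - x k = (p - x k) - (p - xstar) := by abel
      rw [e, norm_add_sq_real, norm_sub_sq_real (p - x k) (p - xstar), norm_smul, norm_smul, inner_smul_left,
        inner_smul_right, mul_pow, mul_pow, Real.norm_eq_abs, Real.norm_eq_abs, sq_abs, sq_abs]
      simp only [conj_trivial]
      ring
    rw [hz1, hz2, hid, hid]
    have h3 := hw k hk
    have h4 : 0 ≤ s * w k * (α - 2) ^ 2 := by positivity
    push_cast
    nlinarith
  · intro k hk
    have hk0 : (0 : ℝ) ≤ k := Nat.cast_nonneg k
    have h1 := mul_le_mul_of_nonneg_left (hI1 k hk) (sq_nonneg ((k : ℝ) + α - 1))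
    have h2 : ((k : ℝ) + α - 1) ^ 2 * ‖y k - x k‖ ^ 2 = ((k : ℝ) - 1) ^ 2 * D k := by
      have := congrArg (fun v => ‖v‖ ^ 2) (hym k hk)
      simpa [norm_smul, mul_pow, hDdef] using this
    have h3 : D (k + 1) = ‖x (k + 1) - x k‖ ^ 2 := by simp [hDdef]
    rw [← h3] at h1
    clear_value w D
    have h4 : 0 ≤ D (k + 1) * (α - 1) ^ 2 := by rw [h3]; positivity
    linarith
end

section
/- Let H be a real Hilbert space, Ψ : H → ℝ ∪ {+∞} proper, lower-semicontinuous and convex, and Φ : H → ℝ convex and continuously differentiable with L-Lipschitz continuous gradient. Suppose x* ∈ argmin(Ψ + Φ), and let (x_k) be generated by the accelerated forward-backward algorithm with parameter α ≥ 3 and step size 0 < s < 1/L. With z_k = x_k + ((k−1)/(α−1))(x_k − x_{k−1}) and E(k) = (2s/(α−1))(k+α−2)²(Θ(x_k) − Θ(x*)) + (α−1)‖z_k − x*‖², one has, for every k ≥ 0, E(k+1) + 2s((α−3)/(α−1)) k (Θ(x_k) − Θ(x*)) ≤ E(k). -/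
open Filter RealInnerProductSpace

section helpers
variable {H : Type*} [NormedAddCommGroup H] [InnerProductSpace ℝ H] [CompleteSpace H]

lemma line_deriv_aux (Φ : H → ℝ) (Φ' : H → H) (hd : ∀ u, HasGradientAt Φ (Φ' u) u)
    (y d : H) (t : ℝ) :
    HasDerivAt (fun t : ℝ => Φ (y + t • d)) ⟪Φ' (y + t • d), d⟫ t := by
  have h1 : HasDerivAt (fun t : ℝ => y + t • d) d t := by
    simpa using ((hasDerivAt_id t).smul_const d).const_add y
  have h2 := (hd (y + t • d)).hasFDerivAt.comp_hasDerivAt t h1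
  simp only [InnerProductSpace.toDual_apply_apply] at h2
  exact h2

lemma convex_first_order (Φ : H → ℝ) (Φ' : H → H) (hc : ConvexOn ℝ Set.univ Φ)
    (hd : ∀ u, HasGradientAt Φ (Φ' u) u) (y u : H) :
    Φ y + ⟪Φ' y, u - y⟫ ≤ Φ u := by
  have hconv : ConvexOn ℝ Set.univ (fun t : ℝ => Φ (y + t • (u - y))) := by
    refine ⟨convex_univ, ?_⟩
    intro a _ b _ p q hp hq hpq
    have := hc.2 (Set.mem_univ (y + a • (u - y))) (Set.mem_univ (y + b • (u - y))) hp hq hpq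
    convert this using 2
    have hq' : p = 1 - q := by linarith
    subst hq'
    simp only [smul_eq_mul]
    module
  have h := hconv.le_slope_of_hasDerivAt (Set.mem_univ 0) (Set.mem_univ 1) one_pos
    (line_deriv_aux Φ Φ' hd y (u - y) 0)
  simp [slope_def_field] at h
  linarith

lemma descent_aux (Φ : H → ℝ) (Φ' : H → H) (L : ℝ) (hL : 0 ≤ L)
    (hd : ∀ u, HasGradientAt Φ (Φ' u) u) (hlip : LipschitzWith (Real.toNNReal L) Φ') (y u : H) :
    Φ u ≤ Φ y + ⟪Φ' y, u - y⟫ + L / 2 * ‖u - y‖ ^ 2 := by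
  set d := u - y with hdd
  let g : ℝ → ℝ := fun t => Φ (y + t • d) - t * ⟪Φ' y, d⟫ - t ^ 2 * (L / 2 * ‖d‖ ^ 2)
  have hg : ∀ t, HasDerivAt g (⟪Φ' (y + t • d), d⟫ - ⟪Φ' y, d⟫ - 2 * t * (L / 2 * ‖d‖ ^ 2)) t := by
    intro t
    have h1 := line_deriv_aux Φ Φ' hd y d t
    have h2 := (hasDerivAt_id t).mul_const ⟪Φ' y, d⟫
    have h3 := (hasDerivAt_pow 2 t).mul_const (L / 2 * ‖d‖ ^ 2)
    have := (h1.sub h2).sub h3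
    refine (this.congr_deriv ?_ : HasDerivAt g _ t)
    norm_num
  have hanti : AntitoneOn g (Set.Icc 0 1) := by
    apply antitoneOn_of_deriv_nonpos (convex_Icc 0 1)
    · exact fun t _ => (hg t).continuousAt.continuousWithinAt
    · exact fun t _ => (hg t).differentiableAt.differentiableWithinAt
    · intro t ht
      rw [interior_Icc] at ht
      rw [(hg t).deriv, ← inner_sub_left]
      have h1 := real_inner_le_norm (Φ' (y + t • d) - Φ' y) d
      have h2 := hlip.norm_sub_le (y + t • d) y
      rw [Real.coe_toNNReal L hL, add_sub_cancel_left, norm_smul, Real.norm_of_nonneg ht.1.le] at h2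
      have h3 := mul_le_mul_of_nonneg_right h2 (norm_nonneg d)
      nlinarith
  have := hanti (Set.left_mem_Icc.2 zero_le_one) (Set.right_mem_Icc.2 zero_le_one) zero_le_one
  simp [g] at this
  have e : y + d = u := by simp [hdd]
  rw [e] at this
  linarith

lemma limit_aux (a b c : ℝ) (hc : 0 ≤ c)
    (h : ∀ l : ℝ, 0 < l → l < 1 → a + (1 - l) * c ≤ b) : a + c ≤ b := by
  by_contra hcon
  push Not at hcon
  have h2 := h (1/2) (by norm_num) (by norm_num)
  by_cases hab : a ≤ b
  · have hcpos : 0 < c := by linarith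
    have h3 := h ((a + c - b) / (2 * c)) (by apply div_pos <;> linarith)
      (by rw [div_lt_one (by linarith)]; linarith)
    have : (a + c - b) / (2 * c) * c = (a + c - b) / 2 := by field_simp
    nlinarith
  · linarith

lemma norm_combo (a b v : H) (l : ℝ) :
    ‖(1 - l) • a + l • b - v‖ ^ 2
      = (1 - l) * ‖a - v‖ ^ 2 + l * ‖b - v‖ ^ 2 - l * (1 - l) * ‖b - a‖ ^ 2 := by
  have e1 : (1 - l) • a + l • b - v = (1 - l) • (a - v) + l • (b - v) := by module
  have e2 : b - a = (b - v) - (a - v) := by abel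
  rw [e1, e2]
  generalize a - v = p
  generalize b - v = q
  rw [norm_add_sq_real, norm_sub_sq_real, norm_smul, norm_smul, real_inner_smul_left,
    real_inner_smul_right, mul_pow, mul_pow, Real.norm_eq_abs, Real.norm_eq_abs, sq_abs, sq_abs,
    real_inner_comm]
  ring

/-- Strong-convexity inequality for the prox, in real form. -/
lemma prox_ineq (Ψ : H → EReal) (s : ℝ) (hs : 0 < s)
    (hΨ_convex : ∀ u v : H, ∀ a b : ℝ, 0 ≤ a → 0 ≤ b → a + b = 1 →
      Ψ (a • u + b • v) ≤ (a : EReal) * Ψ u + (b : EReal) * Ψ v)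
    (p v : H) (hp : ∀ u : H, Ψ p + ((1 / (2 * s) * ‖p - v‖ ^ 2 : ℝ) : EReal)
        ≤ Ψ u + ((1 / (2 * s) * ‖u - v‖ ^ 2 : ℝ) : EReal))
    (P U : ℝ) (u : H) (hP : Ψ p = P) (hU : Ψ u = U) :
    2 * s * P + ‖p - v‖ ^ 2 + ‖u - p‖ ^ 2 ≤ 2 * s * U + ‖u - v‖ ^ 2 := by
  apply limit_aux _ _ _ (sq_nonneg _)
  intro l h0 h1
  have h2 := (hp ((1 - l) • p + l • u)).trans
    (add_le_add_left (hΨ_convex p u (1 - l) l (by linarith) h0.le (by ring)) _)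
  rw [hP, hU, norm_combo] at h2
  have h3 : P + 1 / (2 * s) * ‖p - v‖ ^ 2 ≤ (1 - l) * P + l * U + 1 / (2 * s) *
      ((1 - l) * ‖p - v‖ ^ 2 + l * ‖u - v‖ ^ 2 - l * (1 - l) * ‖u - p‖ ^ 2) := by
    exact_mod_cast h2
  have h4 := mul_le_mul_of_nonneg_left h3 (by positivity : 0 ≤ 2 * s)
  have hi : 2 * s * (1 / (2 * s)) = 1 := by field_simp
  simp only [mul_add, ← mul_assoc, hi, one_mul] at h4
  have h5 : l * (2 * s * P + ‖p - v‖ ^ 2 + (1 - l) * ‖u - p‖ ^ 2)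
      ≤ l * (2 * s * U + ‖u - v‖ ^ 2) := by
    have e : 2 * s * (1 / (2 * s)) *
      ((1 - l) * ‖p - v‖ ^ 2 + l * ‖u - v‖ ^ 2 - l * (1 - l) * ‖u - p‖ ^ 2) = ((1 - l) * ‖p - v‖ ^ 2 + l * ‖u - v‖ ^ 2 - l * (1 - l) * ‖u - p‖ ^ 2) := by
      rw [hi, one_mul]
    have h4' := mul_le_mul_of_nonneg_left h3 (by positivity : 0 ≤ 2 * s)
    rw [mul_add, mul_add, ← mul_assoc, ← mul_assoc, e, hi] at h4'
    linarith
  exact le_of_mul_le_mul_left h5 h0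

/-- One forward-backward step. -/
lemma fb_step (Ψ : H → EReal) (Φ : H → ℝ) (Φ' : H → H) (L s : ℝ)
    (hΨ_convex : ∀ u v : H, ∀ a b : ℝ, 0 ≤ a → 0 ≤ b → a + b = 1 →
      Ψ (a • u + b • v) ≤ (a : EReal) * Ψ u + (b : EReal) * Ψ v)
    (hc : ConvexOn ℝ Set.univ Φ)
    (hd : ∀ u, HasGradientAt Φ (Φ' u) u)
    (hlip : LipschitzWith (Real.toNNReal L) Φ')
    (hs : 0 < s) (hL : 0 ≤ L) (hsL : s * L ≤ 1) (p y : H)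
    (hp : ∀ u : H, Ψ p + ((1 / (2 * s) * ‖p - (y - s • Φ' y)‖ ^ 2 : ℝ) : EReal)
        ≤ Ψ u + ((1 / (2 * s) * ‖u - (y - s • Φ' y)‖ ^ 2 : ℝ) : EReal))
    (P U : ℝ) (u : H) (hP : Ψ p = P) (hU : Ψ u = U) :
    2 * s * (P + Φ p) + ‖p - u‖ ^ 2 ≤ 2 * s * (U + Φ u) + ‖y - u‖ ^ 2 := by
  have h1 := prox_ineq Ψ s hs hΨ_convex p _ hp P U u hP hU
  have h2 := convex_first_order Φ Φ' hc hd y u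
  have h3 := descent_aux Φ Φ' L hL hd hlip y p
  have e : ∀ w : H, ‖w - (y - s • Φ' y)‖ ^ 2
      = ‖w - y‖ ^ 2 + 2 * s * ⟪Φ' y, w - y⟫ + ‖s • Φ' y‖ ^ 2 := by
    intro w
    rw [show w - (y - s • Φ' y) = (w - y) + s • Φ' y by abel, norm_add_sq_real,
      real_inner_smul_right, real_inner_comm]
    ring
  rw [e, e] at h1
  rw [norm_sub_rev p u, norm_sub_rev y u]
  have h4 : s * L * ‖p - y‖ ^ 2 ≤ 1 * ‖p - y‖ ^ 2 :=
    mul_le_mul_of_nonneg_right hsL (sq_nonneg _)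
  have h5 := mul_le_mul_of_nonneg_left h2 (by positivity : 0 ≤ 2 * s)
  have h6 := mul_le_mul_of_nonneg_left h3 (by positivity : 0 ≤ 2 * s)
  linarith

lemma norm_id (a b c d : H) (k β : ℝ) :
    ‖(k + β) • a - (k • c + β • d)‖ ^ 2 - ‖(k + β) • b - (k • c + β • d)‖ ^ 2
      = (k + β) * (k * (‖a - c‖ ^ 2 - ‖b - c‖ ^ 2) + β * (‖a - d‖ ^ 2 - ‖b - d‖ ^ 2)) := by
  simp only [norm_sub_sq_real, norm_smul, mul_pow, Real.norm_eq_abs, sq_abs, inner_add_right,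
    real_inner_smul_left, real_inner_smul_right]
  ring

end helpers

/-- Energy inequality (10): `E(k+1) + 2s((α-3)/(α-1)) k (Θ(x_k) - Θ(x*)) ≤ E(k)` for all `k ≥ 0`. -/
theorem fista_energy_inequality
    {H : Type*} [NormedAddCommGroup H] [InnerProductSpace ℝ H] [CompleteSpace H]
    (Ψ : H → EReal) (Φ : H → ℝ) (Φ' : H → H) (L s α : ℝ)
    (hΨ_ne_bot : ∀ u, Ψ u ≠ ⊥) (hΨ_proper : ∃ u, Ψ u ≠ ⊤)
    (hΨ_lsc : LowerSemicontinuous Ψ)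
    (hΨ_convex : ∀ u v : H, ∀ a b : ℝ, 0 ≤ a → 0 ≤ b → a + b = 1 →
      Ψ (a • u + b • v) ≤ (a : EReal) * Ψ u + (b : EReal) * Ψ v)
    (hΦ_convex : ConvexOn ℝ Set.univ Φ)
    (hΦ_diff : ∀ u, HasGradientAt Φ (Φ' u) u)
    (hΦ_lip : LipschitzWith (Real.toNNReal L) Φ')
    (hα : 3 ≤ α) (hs : 0 < s) (hsL : s < 1 / L)
    (x y : ℕ → H)
    (hy : ∀ k : ℕ,
      y k = x k + (((k : ℝ) - 1) / ((k : ℝ) + α - 1)) • (x k - x (k - 1)))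
    (hx : ∀ k : ℕ, ∀ u : H,
      Ψ (x (k + 1)) + ((1 / (2 * s) * ‖x (k + 1) - (y k - s • Φ' (y k))‖ ^ 2 : ℝ) : EReal)
        ≤ Ψ u + ((1 / (2 * s) * ‖u - (y k - s • Φ' (y k))‖ ^ 2 : ℝ) : EReal))
    (xstar : H)
    (hxstar : ∀ u, Ψ xstar + (Φ xstar : EReal) ≤ Ψ u + (Φ u : EReal)) :
    ∀ k : ℕ,
      (((2 * s / (α - 1) * (((k + 1) : ℝ) + α - 2) ^ 2 : ℝ) : EReal) * ((Ψ (x (k + 1)) + (Φ (x (k + 1)) : EReal)) - (Ψ xstar + (Φ xstar : EReal))) + (((α - 1) * ‖(x (k + 1) + ((((k + 1) : ℝ) - 1) / (α - 1)) • (x (k + 1) - x ((k + 1) - 1))) - xstar‖ ^ 2 : ℝ) : EReal)) + ((2 * s * ((α - 3) / (α - 1)) * (k : ℝ) : ℝ) : EReal) * ((Ψ (x k) + (Φ (x k) : EReal)) - (Ψ xstar + (Φ xstar : EReal))) ≤ (((2 * s / (α - 1) * ((k : ℝ) + α - 2) ^ 2 : ℝ) : EReal) * ((Ψ (x k) + (Φ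 (x k) : EReal)) - (Ψ xstar + (Φ xstar : EReal))) + (((α - 1) * ‖(x k + (((k : ℝ) - 1) / (α - 1)) • (x k - x (k - 1))) - xstar‖ ^ 2 : ℝ) : EReal)) := by
  intro k
  have hLpos : 0 < L := by
    by_contra h
    push Not at h
    have : 1 / L ≤ 0 := div_nonpos_of_nonneg_of_nonpos zero_le_one h
    linarith
  have hsL' : s * L ≤ 1 := ((lt_div_iff₀ hLpos).1 hsL).le
  have hfin : ∀ u, Ψ u ≠ ⊤ → ∃ r : ℝ, Ψ u = r := fun u hu =>
    ⟨(Ψ u).toReal, (EReal.coe_toReal hu (hΨ_ne_bot u)).symm⟩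
  obtain ⟨u0, hu0⟩ := hΨ_proper
  obtain ⟨r0, hr0⟩ := hfin u0 hu0
  have hxfin : ∀ j, ∃ r : ℝ, Ψ (x (j + 1)) = r := by
    intro j
    apply hfin
    intro htop
    have := hx j u0
    rw [htop, hr0, EReal.top_add_coe, ← EReal.coe_add] at this
    exact EReal.coe_ne_top _ (top_le_iff.1 this)
  obtain ⟨S, hS⟩ : ∃ r : ℝ, Ψ xstar = r := by
    apply hfin
    intro htop
    have := hxstar u0
    rw [htop, hr0, EReal.top_add_coe, ← EReal.coe_add] at this
    exact EReal.coe_ne_top _ (top_le_iff.1 this)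
  obtain ⟨P, hP⟩ := hxfin k
  have hβ : 0 < α - 1 := by linarith
  have hk : (0 : ℝ) ≤ k := Nat.cast_nonneg k
  have ht : 0 < (k : ℝ) + α - 1 := by linarith
  -- vector identities
  have hz : (α - 1) • ((x k + (((k : ℝ) - 1) / (α - 1)) • (x k - x (k - 1))) - xstar)
      = ((k : ℝ) + (α - 1)) • y k - ((k : ℝ) • x k + (α - 1) • xstar) := by
    have e1 : (α - 1) • ((((k : ℝ) - 1) / (α - 1)) • (x k - x (k - 1)))
        = ((k : ℝ) - 1) • (x k - x (k - 1)) := by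
      rw [smul_smul, mul_div_cancel₀ _ hβ.ne']
    have e2 : ((k : ℝ) + (α - 1)) • ((((k : ℝ) - 1) / ((k : ℝ) + α - 1)) • (x k - x (k - 1)))
        = ((k : ℝ) - 1) • (x k - x (k - 1)) := by
      rw [smul_smul, ← add_sub_assoc, mul_div_cancel₀ _ ht.ne']
    rw [hy k, smul_sub, smul_add, smul_add, e1, e2]
    module
  have hz' : (α - 1) • ((x (k + 1) + ((((k + 1) : ℝ) - 1) / (α - 1)) •
      (x (k + 1) - x ((k + 1) - 1))) - xstar)
      = ((k : ℝ) + (α - 1)) • x (k + 1) - ((k : ℝ) • x k + (α - 1) • xstar) := by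
    have e1 : (α - 1) • ((((k + 1 : ℝ) - 1) / (α - 1)) • (x (k + 1) - x k))
        = (k : ℝ) • (x (k + 1) - x k) := by
      rw [smul_smul, mul_div_cancel₀ _ hβ.ne', add_sub_cancel_right]
    rw [Nat.add_sub_cancel, smul_sub, smul_add, e1]
    module
  have hn := norm_id (y k) (x (k + 1)) (x k) xstar (k : ℝ) (α - 1)
  rw [← hz, ← hz', norm_smul, norm_smul, mul_pow, mul_pow, Real.norm_of_nonneg hβ.le] at hn
  generalize ‖(x k + (((k : ℝ) - 1) / (α - 1)) • (x k - x (k - 1))) - xstar‖ ^ 2 = A at hn ⊢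
  generalize ‖(x (k + 1) + ((((k + 1) : ℝ) - 1) / (α - 1)) •
      (x (k + 1) - x ((k + 1) - 1))) - xstar‖ ^ 2 = B at hn ⊢
  have hstar := fb_step Ψ Φ Φ' L s hΨ_convex hΦ_convex hΦ_diff hΦ_lip hs hLpos.le hsL'
    (x (k + 1)) (y k) (hx k) P S xstar hP hS
  by_cases hX : Ψ (x k) = ⊤
  · have hk0 : k = 0 := by
      by_contra h
      obtain ⟨j, rfl⟩ := Nat.exists_eq_succ_of_ne_zero h
      obtain ⟨r, hr⟩ := hxfin j
      rw [hr] at hX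
      exact EReal.coe_ne_top _ hX
    have hc : 0 < 2 * s / (α - 1) * ((k : ℝ) + α - 2) ^ 2 := by
      have : 0 < (k : ℝ) + α - 2 := by linarith
      positivity
    have : (Ψ (x k) + (Φ (x k) : EReal)) - (Ψ xstar + (Φ xstar : EReal)) = ⊤ := by
      rw [hX, hS, EReal.top_add_coe, ← EReal.coe_add, EReal.top_sub_coe]
    rw [this, EReal.coe_mul_top_of_pos hc, EReal.top_add_coe]
    exact le_top
  · obtain ⟨Q, hQ⟩ := hfin _ hX
    have hprev := fb_step Ψ Φ Φ' L s hΨ_convex hΦ_convex hΦ_diff hΦ_lip hs hLpos.le hsL'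
      (x (k + 1)) (y k) (hx k) P Q (x k) hP hQ
    have hmin := hxstar (x k)
    rw [hS, hQ] at hmin
    have hmin' : S + Φ xstar ≤ Q + Φ (x k) := by exact_mod_cast hmin
    rw [hP, hS, hQ]
    norm_cast
    push_cast
    generalize ‖x (k + 1) - x k‖ ^ 2 = n1 at *
    generalize ‖y k - x k‖ ^ 2 = n2 at *
    generalize ‖x (k + 1) - xstar‖ ^ 2 = n3 at *
    generalize ‖y k - xstar‖ ^ 2 = n4 at *
    obtain ⟨a, ha⟩ : ∃ a, a = P + Φ (x (k + 1)) - (S + Φ xstar) := ⟨_, rfl⟩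
    obtain ⟨b, hb⟩ : ∃ b, b = Q + Φ (x k) - (S + Φ xstar) := ⟨_, rfl⟩
    rw [← ha, ← hb]
    have hb0 : 0 ≤ b := by linarith
    have i1 : 2 * s * a + n3 ≤ n4 := by rw [ha]; linarith
    have i2 : 2 * s * a + n1 ≤ 2 * s * b + n2 := by rw [ha, hb]; linarith
    generalize (k : ℝ) = κ at *
    have i3 : 0 ≤ (κ + (α - 1)) * (κ * (2 * s * b + n2 - (2 * s * a + n1))
        + (α - 1) * (n4 - (2 * s * a + n3))) := by
      apply mul_nonneg (by linarith)
      apply add_nonneg <;> apply mul_nonneg <;> linarith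
    have i4 : 0 ≤ 2 * s * ((α - 2) ^ 2 * b) := by positivity
    rw [← sub_nonneg]
    have key : (2 * s / (α - 1) * (κ + α - 2) ^ 2 * b + (α - 1) * A) -
        (2 * s / (α - 1) * (κ + 1 + α - 2) ^ 2 * a + (α - 1) * B
          + 2 * s * ((α - 3) / (α - 1)) * κ * b)
        = ((κ + (α - 1)) * (κ * (2 * s * b + n2 - (2 * s * a + n1))
        + (α - 1) * (n4 - (2 * s * a + n3))) + 2 * s * ((α - 2) ^ 2 * b)) / (α - 1) := by
      rw [eq_div_iff hβ.ne']
      have hA : (α - 1) ^ 2 * A = (α - 1) ^ 2 * B + (κ + (α - 1)) * (κ * (n2 - n1) + (α - 1) * (n4 - n3)) := by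
        linarith
      field_simp
      linear_combination hA
    have : 0 ≤ (2 * s / (α - 1) * (κ + α - 2) ^ 2 * b + (α - 1) * A) -
        (2 * s / (α - 1) * (κ + 1 + α - 2) ^ 2 * a + (α - 1) * B
          + 2 * s * ((α - 3) / (α - 1)) * κ * b) := by
      rw [key]; exact div_nonneg (by linarith) hβ.le
    exact this
end

section
/- Let H be a real Hilbert space, Ψ : H → ℝ ∪ {+∞} proper, lower-semicontinuous and convex, and Φ : H → ℝ convex and continuously differentiable with L-Lipschitz continuous gradient. Suppose x* ∈ argmin(Ψ + Φ), and let (x_k) be generated by the accelerated forward-backward algorithm with parameter α ≥ 3 and step size 0 < s < 1/L. With θ_k = Θ(x_k) − Θ(x*) and d_k = (1/(2s))‖x_{k+1} − x_k‖², one has, for every k ≥ 1, [k² d_k + (k+1)² θ_{k+1}] − [(k−1)² d_{k−1} + k² θ_k] ≤ 2(k+1) θ_{k+1}. -/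
open Filter RealInnerProductSpace

lemma fista_line_deriv {H : Type*} [NormedAddCommGroup H] [InnerProductSpace ℝ H] [CompleteSpace H]
    (Φ : H → ℝ) (Φ' : H → H) (hΦ_diff : ∀ u, HasGradientAt Φ (Φ' u) u) (p d : H) (t : ℝ) :
    HasDerivAt (fun t : ℝ => Φ (p + t • d)) ⟪Φ' (p + t • d), d⟫ t := by
  have h1 : HasDerivAt (fun t : ℝ => p + t • d) d t := by
    simpa using ((hasDerivAt_id t).smul_const d).const_add p
  have h2 := (hΦ_diff (p + t • d)).hasFDerivAt
  have h3 := h2.comp_hasDerivAt t h1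
  simpa [Function.comp_def] using h3

lemma fista_convex_grad {H : Type*} [NormedAddCommGroup H] [InnerProductSpace ℝ H] [CompleteSpace H]
    (Φ : H → ℝ) (Φ' : H → H) (hΦ_diff : ∀ u, HasGradientAt Φ (Φ' u) u)
    (hΦ_convex : ConvexOn ℝ Set.univ Φ) (p d : H) :
    Φ p + ⟪Φ' p, d⟫ ≤ Φ (p + d) := by
  have hc : ConvexOn ℝ Set.univ (fun t : ℝ => Φ (p + t • d)) := by
    refine ⟨convex_univ, fun a _ b _ m n hm hn hmn => ?_⟩
    have h := hΦ_convex.2 (Set.mem_univ (p + a • d)) (Set.mem_univ (p + b • d)) hm hn hmn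
    have e : p + (m • a + n • b) • d = m • (p + a • d) + n • (p + b • d) := by
      have : p = (m + n) • p := by rw [hmn, one_smul]
      rw [smul_add, smul_add]
      nth_rewrite 1 [this]
      simp only [smul_eq_mul]
      module
    simpa only [e] using h
  have h := hc.le_slope_of_hasDerivAt (Set.mem_univ 0) (Set.mem_univ 1) one_pos
    (fista_line_deriv Φ Φ' hΦ_diff p d 0)
  simp [slope_def_field] at h
  linarith

lemma fista_descent {H : Type*} [NormedAddCommGroup H] [InnerProductSpace ℝ H] [CompleteSpace H]
    (Φ : H → ℝ) (Φ' : H → H) (hΦ_diff : ∀ u, HasGradientAt Φ (Φ' u) u) (L : ℝ) (hL : 0 ≤ L)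
    (hΦ_lip : LipschitzWith (Real.toNNReal L) Φ') (p d : H) :
    Φ (p + d) ≤ Φ p + ⟪Φ' p, d⟫ + L / 2 * ‖d‖ ^ 2 := by
  have hd : ∀ t : ℝ, HasDerivAt
      (fun t : ℝ => Φ (p + t • d) - t * ⟪Φ' p, d⟫ - t ^ 2 * (L / 2 * ‖d‖ ^ 2))
      (⟪Φ' (p + t • d), d⟫ - ⟪Φ' p, d⟫ - 2 * t * (L / 2 * ‖d‖ ^ 2)) t := by
    intro t
    have h1 := fista_line_deriv Φ Φ' hΦ_diff p d t
    have h2 : HasDerivAt (fun t : ℝ => t * ⟪Φ' p, d⟫) ⟪Φ' p, d⟫ t := by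
      simpa using (hasDerivAt_id t).mul_const ⟪Φ' p, d⟫
    have h3 : HasDerivAt (fun t : ℝ => t ^ 2 * (L / 2 * ‖d‖ ^ 2)) (2 * t * (L / 2 * ‖d‖ ^ 2)) t := by
      simpa using (hasDerivAt_pow 2 t).mul_const (L / 2 * ‖d‖ ^ 2)
    exact (h1.sub h2).sub h3
  have hanti : AntitoneOn
      (fun t : ℝ => Φ (p + t • d) - t * ⟪Φ' p, d⟫ - t ^ 2 * (L / 2 * ‖d‖ ^ 2))
      (Set.Icc 0 1) := by
    refine antitoneOn_of_deriv_nonpos (convex_Icc 0 1)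
      (fun t _ => (hd t).continuousAt.continuousWithinAt)
      (fun t _ => (hd t).differentiableAt.differentiableWithinAt) ?_
    intro t ht
    rw [interior_Icc] at ht
    rw [(hd t).deriv, ← inner_sub_left]
    have h1 := real_inner_le_norm (Φ' (p + t • d) - Φ' p) d
    have h2 := hΦ_lip.dist_le_mul (p + t • d) p
    rw [dist_eq_norm, dist_eq_norm, add_sub_cancel_left, norm_smul, Real.norm_of_nonneg ht.1.le,
      Real.coe_toNNReal L hL] at h2
    have h3 := mul_le_mul_of_nonneg_right h2 (norm_nonneg d)
    nlinarith
  have h := hanti (Set.left_mem_Icc.2 zero_le_one) (Set.right_mem_Icc.2 zero_le_one) zero_le_one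
  simp at h
  linarith

/-- key prox inequality -/
lemma fista_prox {H : Type*} [NormedAddCommGroup H] [InnerProductSpace ℝ H]
    (Ψ : H → EReal) (s : ℝ)
    (hΨ_convex : ∀ u v : H, ∀ a b : ℝ, 0 ≤ a → 0 ≤ b → a + b = 1 →
      Ψ (a • u + b • v) ≤ (a : EReal) * Ψ u + (b : EReal) * Ψ v)
    (p v u : H) (P U : ℝ) (hP : Ψ p = P) (hU : Ψ u = U)
    (hp : ∀ w : H, Ψ p + ((1 / (2 * s) * ‖p - v‖ ^ 2 : ℝ) : EReal)
        ≤ Ψ w + ((1 / (2 * s) * ‖w - v‖ ^ 2 : ℝ) : EReal)) :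
    P - U ≤ 1 / (2 * s) * (2 * ⟪p - v, u - p⟫) := by
  have key : ∀ t : ℝ, t ∈ Set.Ioo (0 : ℝ) 1 →
      P - U ≤ 1 / (2 * s) * (2 * ⟪p - v, u - p⟫) + t * (1 / (2 * s) * ‖u - p‖ ^ 2) := by
    intro t ht
    have h1 := hp ((1 - t) • p + t • u)
    have h2 := hΨ_convex p u (1 - t) t (by linarith [ht.2]) ht.1.le (by ring)
    have h3 := h1.trans (add_le_add_left h2 _)
    rw [hP, hU] at h3
    norm_cast at h3
    have e : (1 - t) • p + t • u - v = (p - v) + t • (u - p) := by module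
    rw [e, norm_add_sq_real, norm_smul, inner_smul_right, mul_pow, Real.norm_eq_abs, sq_abs] at h3
    refine le_of_mul_le_mul_left ?_ ht.1
    linarith
  have hlim : Tendsto (fun t : ℝ => 1 / (2 * s) * (2 * ⟪p - v, u - p⟫)
      + t * (1 / (2 * s) * ‖u - p‖ ^ 2)) (nhdsWithin 0 (Set.Ioi 0))
      (nhds (1 / (2 * s) * (2 * ⟪p - v, u - p⟫) + 0 * (1 / (2 * s) * ‖u - p‖ ^ 2))) := by
    apply Tendsto.mono_left _ nhdsWithin_le_nhds
    exact Continuous.tendsto (by fun_prop) 0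
  have h := ge_of_tendsto hlim
    (Filter.eventually_of_mem (Ioo_mem_nhdsGT (zero_lt_one' ℝ)) key)
  linarith

/-- Inequality (13): `[k²d_k + (k+1)²θ_{k+1}] - [(k-1)²d_{k-1} + k²θ_k] ≤ 2(k+1)θ_{k+1}`. -/
theorem fista_telescoping_inequality
    {H : Type*} [NormedAddCommGroup H] [InnerProductSpace ℝ H] [CompleteSpace H]
    (Ψ : H → EReal) (Φ : H → ℝ) (Φ' : H → H) (L s α : ℝ)
    (hΨ_ne_bot : ∀ u, Ψ u ≠ ⊥) (hΨ_proper : ∃ u, Ψ u ≠ ⊤)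
    (hΨ_lsc : LowerSemicontinuous Ψ)
    (hΨ_convex : ∀ u v : H, ∀ a b : ℝ, 0 ≤ a → 0 ≤ b → a + b = 1 →
      Ψ (a • u + b • v) ≤ (a : EReal) * Ψ u + (b : EReal) * Ψ v)
    (hΦ_convex : ConvexOn ℝ Set.univ Φ)
    (hΦ_diff : ∀ u, HasGradientAt Φ (Φ' u) u)
    (hΦ_lip : LipschitzWith (Real.toNNReal L) Φ')
    (hα : 3 ≤ α) (hs : 0 < s) (hsL : s < 1 / L)
    (x y : ℕ → H)
    (hy : ∀ k : ℕ, 1 ≤ k →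
      y k = x k + (((k : ℝ) - 1) / ((k : ℝ) + α - 1)) • (x k - x (k - 1)))
    (hx : ∀ k : ℕ, 1 ≤ k → ∀ u : H,
      Ψ (x (k + 1)) + ((1 / (2 * s) * ‖x (k + 1) - (y k - s • Φ' (y k))‖ ^ 2 : ℝ) : EReal)
        ≤ Ψ u + ((1 / (2 * s) * ‖u - (y k - s • Φ' (y k))‖ ^ 2 : ℝ) : EReal))
    (xstar : H)
    (hxstar : ∀ u, Ψ xstar + (Φ xstar : EReal) ≤ Ψ u + (Φ u : EReal)) :
    ∀ k : ℕ, 1 ≤ k →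
      ((((k : ℝ) ^ 2 * (1 / (2 * s) * ‖x (k + 1) - x k‖ ^ 2) : ℝ) : EReal) + ((((k : ℝ) + 1) ^ 2 : ℝ) : EReal) * ((Ψ (x (k + 1)) + (Φ (x (k + 1)) : EReal)) - (Ψ xstar + (Φ xstar : EReal)))) -
        (((((k : ℝ) - 1) ^ 2 * (1 / (2 * s) * ‖x ((k - 1) + 1) - x (k - 1)‖ ^ 2) : ℝ) : EReal) + (((k : ℝ) ^ 2 : ℝ) : EReal) * ((Ψ (x k) + (Φ (x k) : EReal)) - (Ψ xstar + (Φ xstar : EReal))))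
        ≤ ((2 * ((k : ℝ) + 1) : ℝ) : EReal) * ((Ψ (x (k + 1)) + (Φ (x (k + 1)) : EReal)) - (Ψ xstar + (Φ xstar : EReal))) := by
  have hL : 0 < L := by
    by_contra h
    have : 1 / L ≤ 0 := div_nonpos_of_nonneg_of_nonpos zero_le_one (not_lt.1 h)
    linarith
  have hLs : L / 2 ≤ 1 / (2 * s) := by
    rw [lt_div_iff₀ hL] at hsL
    rw [div_le_div_iff₀ two_pos (by positivity)]
    linarith
  obtain ⟨u0, hu0⟩ := hΨ_proper
  have lift : ∀ u, Ψ u ≠ ⊤ → ∃ r : ℝ, Ψ u = r := fun u hu =>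
    ⟨(Ψ u).toReal, (EReal.coe_toReal hu (hΨ_ne_bot u)).symm⟩
  obtain ⟨U0, hU0⟩ := lift u0 hu0
  have hst : Ψ xstar ≠ ⊤ := by
    intro h
    have := hxstar u0
    rw [h, hU0, EReal.top_add_coe, top_le_iff] at this
    exact EReal.coe_ne_top (U0 + Φ u0) (by exact_mod_cast this)
  obtain ⟨S, hS⟩ := lift xstar hst
  intro k hk
  have hPt : Ψ (x (k + 1)) ≠ ⊤ := by
    intro h
    have := hx k hk u0
    rw [h, hU0, EReal.top_add_coe, top_le_iff] at this
    exact EReal.coe_ne_top _ ((EReal.coe_add _ _).trans this)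
  obtain ⟨P, hP⟩ := lift _ hPt
  have hk1 : (1 : ℝ) ≤ k := by exact_mod_cast hk
  have hθ := hxstar (x (k + 1))
  rw [hS, hP] at hθ
  have hθ' : S + Φ xstar ≤ P + Φ (x (k + 1)) := by exact_mod_cast hθ
  by_cases hUt : Ψ (x k) = ⊤
  · have e : (((k : ℝ) ^ 2 : ℝ) : EReal) * ((Ψ (x k) + (Φ (x k) : EReal)) -
        (Ψ xstar + (Φ xstar : EReal))) = ⊤ := by
      rw [hUt, hS, EReal.top_add_coe, ← EReal.coe_add, EReal.top_sub_coe,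
        EReal.coe_mul_top_of_pos (by positivity)]
    rw [e, EReal.coe_add_top, EReal.sub_top]
    exact bot_le
  obtain ⟨U, hU⟩ := lift _ hUt
  have h1 := fista_prox Ψ s hΨ_convex (x (k + 1)) (y k - s • Φ' (y k)) (x k) P U hP hU (hx k hk)
  have h2 := fista_convex_grad Φ Φ' hΦ_diff hΦ_convex (y k) (x k - y k)
  have h3 := fista_descent Φ Φ' hΦ_diff L hL.le hΦ_lip (y k) (x (k + 1) - y k)
  rw [add_sub_cancel] at h2 h3
  have h4 := mul_le_mul_of_nonneg_right hLs (sq_nonneg ‖x (k + 1) - y k‖)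
  have hc : ‖x k - y k‖ ^ 2 * (k : ℝ) ^ 2 ≤ ((k : ℝ) - 1) ^ 2 * ‖x k - x (k - 1)‖ ^ 2 := by
    have e : x k - y k = -((((k : ℝ) - 1) / ((k : ℝ) + α - 1)) • (x k - x (k - 1))) := by
      rw [hy k hk]; module
    rw [e, norm_neg, norm_smul, mul_pow, Real.norm_eq_abs, sq_abs, div_pow]
    have hden : (0 : ℝ) < ((k : ℝ) + α - 1) := by linarith
    have hr : (k : ℝ) ^ 2 / ((k : ℝ) + α - 1) ^ 2 ≤ 1 := by
      rw [div_le_one (by positivity)]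
      exact pow_le_pow_left₀ (by linarith) (by linarith) 2
    have := mul_le_mul_of_nonneg_left hr
      (mul_nonneg (sq_nonneg ((k : ℝ) - 1)) (sq_nonneg ‖x k - x (k - 1)‖))
    calc _ = ((k : ℝ) - 1) ^ 2 * ‖x k - x (k - 1)‖ ^ 2 * ((k : ℝ) ^ 2 / ((k : ℝ) + α - 1) ^ 2) := by
          ring
      _ ≤ _ := by linarith
  have hstep : P + Φ (x (k + 1)) + 1 / (2 * s) * ‖x (k + 1) - x k‖ ^ 2
      ≤ U + Φ (x k) + 1 / (2 * s) * ‖x k - y k‖ ^ 2 := by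
    have e1 : x (k + 1) - (y k - s • Φ' (y k)) = (x (k + 1) - y k) + s • Φ' (y k) := by module
    have e2 : x k - y k = (x (k + 1) - y k) + (x k - x (k + 1)) := by module
    have e3 : ‖x k - y k‖ ^ 2 = ‖x (k + 1) - y k‖ ^ 2
        + 2 * ⟪x (k + 1) - y k, x k - x (k + 1)⟫ + ‖x (k + 1) - x k‖ ^ 2 := by
      rw [e2, norm_add_sq_real, norm_sub_rev (x k) (x (k + 1))]
    have e4 : ⟪Φ' (y k), x k - y k⟫
        = ⟪Φ' (y k), x (k + 1) - y k⟫ + ⟪Φ' (y k), x k - x (k + 1)⟫ := by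
      rw [← inner_add_right, ← e2]
    rw [e1, inner_add_left, real_inner_smul_left] at h1
    have e5 : 1 / (2 * s) * (2 * (⟪x (k + 1) - y k, x k - x (k + 1)⟫
        + s * ⟪Φ' (y k), x k - x (k + 1)⟫))
        = 1 / (2 * s) * (2 * ⟪x (k + 1) - y k, x k - x (k + 1)⟫)
        + ⟪Φ' (y k), x k - x (k + 1)⟫ := by
      field_simp
    rw [e5] at h1
    rw [e3]
    linarith
  have hkk : k - 1 + 1 = k := by omega
  rw [hkk, hP, hU, hS]
  have hfin : ((k : ℝ) ^ 2 * (1 / (2 * s) * ‖x (k + 1) - x k‖ ^ 2)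
      + ((k : ℝ) + 1) ^ 2 * ((P + Φ (x (k + 1))) - (S + Φ xstar)))
      - (((k : ℝ) - 1) ^ 2 * (1 / (2 * s) * ‖x k - x (k - 1)‖ ^ 2)
        + (k : ℝ) ^ 2 * ((U + Φ (x k)) - (S + Φ xstar)))
      ≤ (2 * ((k : ℝ) + 1)) * ((P + Φ (x (k + 1))) - (S + Φ xstar)) := by
    have a1 := mul_le_mul_of_nonneg_left hstep (sq_nonneg (k : ℝ))
    have a2 := mul_le_mul_of_nonneg_left hc (show 0 ≤ 1 / (2 * s) by positivity)
    linarith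
  have := EReal.coe_le_coe_iff.2 hfin
  simpa only [EReal.coe_add, EReal.coe_sub, EReal.coe_mul] using this
end

section
/- Let (β_k)_{k≥1} be a sequence of nonnegative real numbers such that the series Σ_{k=1}^∞ β_k/k converges. Then liminf_{k→∞} β_k ln(k) = 0. -/
open Filter RealInnerProductSpace

theorem not_summable_inv_mul_log :
    ¬ Summable (fun k : ℕ => ((k : ℝ) * Real.log k)⁻¹) := by
  have hnn : (0 : ℕ → ℝ) ≤ᶠ[atTop] (fun k : ℕ => ((k : ℝ) * Real.log k)⁻¹) := by
    refine Eventually.of_forall fun k => ?_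
    exact inv_nonneg.2 (mul_nonneg (Nat.cast_nonneg k) (Real.log_natCast_nonneg k))
  have hm : ∀ᶠ k : ℕ in atTop, (((k + 1 : ℕ) : ℝ) * Real.log ((k + 1 : ℕ) : ℝ))⁻¹
      ≤ ((k : ℝ) * Real.log k)⁻¹ := by
    filter_upwards [eventually_ge_atTop 2] with k hk
    have h2 : (2 : ℝ) ≤ k := by exact_mod_cast hk
    have hl : 0 < Real.log k := Real.log_pos (by linarith)
    have hle : (k : ℝ) ≤ ((k + 1 : ℕ) : ℝ) := by push_cast; linarith
    have hll : Real.log k ≤ Real.log ((k + 1 : ℕ) : ℝ) := Real.log_le_log (by linarith) hle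
    exact inv_anti₀ (by positivity) (mul_le_mul hle hll hl.le (by positivity))
  rw [← summable_condensed_iff_of_eventually_nonneg hnn hm]
  intro h
  apply Real.not_summable_natCast_inv
  refine (h.mul_left (Real.log 2)).congr fun k => ?_
  have hl : Real.log 2 ≠ 0 := (Real.log_pos (by norm_num)).ne'
  push_cast
  rw [Real.log_pow, mul_inv, mul_inv]
  field_simp

/-- If `β_k ≥ 0` and `∑ β_k / k` converges, then `liminf β_k ln k = 0`. -/
theorem liminf_mul_log_eq_zero_of_summable_div
    (β : ℕ → ℝ) (hβ : ∀ k : ℕ, 1 ≤ k → 0 ≤ β k)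
    (hsum : Summable fun k : ℕ => β k / (k : ℝ)) :
    Filter.liminf (fun k : ℕ => β k * Real.log k) Filter.atTop = 0 := by
  have key : ∀ c : ℝ, 0 < c → ∃ᶠ k : ℕ in atTop, β k * Real.log k ≤ c := by
    intro c hc hcon
    apply not_summable_inv_mul_log
    refine Summable.of_norm_bounded_eventually_nat (hsum.mul_left c⁻¹) ?_
    filter_upwards [hcon, eventually_ge_atTop 2] with k hk h2
    have h2 : (2 : ℝ) ≤ k := by exact_mod_cast h2
    have hl : 0 < Real.log k := Real.log_pos (by linarith)
    have hk0 : (0 : ℝ) < k := by linarith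
    rw [Real.norm_of_nonneg (by positivity), inv_mul_eq_div, div_div, inv_eq_one_div,
      div_le_div_iff₀ (by positivity) (by positivity)]
    have := mul_le_mul_of_nonneg_left (not_le.1 hk).le hk0.le
    linarith
  have hge : ∀ᶠ k : ℕ in atTop, 0 ≤ β k * Real.log k := by
    filter_upwards [eventually_ge_atTop 1] with k hk
    exact mul_nonneg (hβ k hk) (Real.log_natCast_nonneg k)
  apply le_antisymm
  · refine le_of_forall_pos_le_add fun c hc => ?_
    rw [zero_add]
    exact liminf_le_of_frequently_le (key c hc) ⟨0, by simpa using hge⟩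
  · exact le_liminf_of_le (IsCoboundedUnder.of_frequently_le (key 1 one_pos)) hge
end
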